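/- Let d ≥ 3 and ε ∈ (0,1), with B = B(0,N^{1−ε/2}) ⊂ T. There exist constants c, c′ > 0 depending only on d and ε such that for every nonempty V ⊆ B and all N ≥ 2: 1/E[H_V] ≤ (1 + c N^{−c′}) · cap(𝖵)/N^d, where 𝖵 = φ(V). -/

import Mathlib

open MeasureTheory Filter Classical
open scoped ENNReal NNReal

noncomputable section

namespace Frag

/-! ### Graph-theoretic basics -/

/-- Two vertices of `Fin d → R` are adjacent if they differ in exactly one
coordinate, by `±1` (Euclidean distance one). -/
def adj {d : ℕ} {R : Type*} [AddGroupWithOne R] (x y : Fin d → R) : Prop :=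
  x ≠ y ∧ ∃ i : Fin d, (y i = x i + 1 ∨ x i = y i + 1) ∧ ∀ j : Fin d, j ≠ i → x j = y j

/-- The discrete torus `(ℤ/Nℤ)^d`. -/
abbrev Torus (d N : ℕ) := Fin d → ZMod N

/-- The lattice `ℤ^d`. -/
abbrev Lat (d : ℕ) := Fin d → ℤ

instance (n : ℕ) : MeasurableSpace (ZMod n) := ⊤

/-- The `ℓ∞`-distance on the torus. -/
def torusDist {d N : ℕ} (x y : Torus d N) : ℕ :=
  Finset.univ.sup fun i : Fin d => min (x i - y i).val (y i - x i).val

/-- The `ℓ∞`-distance on the lattice. -/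
def latDist {d : ℕ} (x y : Lat d) : ℕ :=
  Finset.univ.sup fun i : Fin d => (x i - y i).natAbs

/-- Closed `ℓ∞`-ball in the torus. -/
def torusBall {d N : ℕ} (x : Torus d N) (r : ℝ) : Set (Torus d N) :=
  {y | (torusDist x y : ℝ) ≤ r}

/-- Closed `ℓ∞`-ball in the lattice. -/
def latBall {d : ℕ} (x : Lat d) (r : ℝ) : Set (Lat d) :=
  {y | (latDist x y : ℝ) ≤ r}

/-- `x` and `y` are connected by a nearest-neighbour path staying in `S`. -/
def connectedIn {α : Type*} (rel : α → α → Prop) (S : Set α) (x y : α) : Prop :=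
  ∃ (n : ℕ) (p : ℕ → α), p 0 = x ∧ p n = y ∧ (∀ k, k ≤ n → p k ∈ S) ∧
    ∀ k, k < n → rel (p k) (p (k + 1))

/-- The connected component of `x` inside `S`. -/
def compOf {α : Type*} (rel : α → α → Prop) (S : Set α) (x : α) : Set α :=
  {y | connectedIn rel S x y}

/-- `S` is a connected set. -/
def IsConnSet {α : Type*} (rel : α → α → Prop) (S : Set α) : Prop :=
  ∀ x ∈ S, ∀ y ∈ S, connectedIn rel S x y

/-- External vertex boundary. -/
def extBdry {α : Type*} (rel : α → α → Prop) (S : Set α) : Set α :=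
  {y | y ∉ S ∧ ∃ x ∈ S, rel x y}

/-- Internal vertex boundary. -/
def intBdry {α : Type*} (rel : α → α → Prop) (S : Set α) : Set α :=
  {x | x ∈ S ∧ ∃ y, y ∉ S ∧ rel x y}

/-- The cardinality of the largest connected component of `S`. -/
def maxCompSize {α : Type*} (rel : α → α → Prop) (S : Set α) : ℕ :=
  sSup {n | ∃ x ∈ S, n = (compOf rel S x).ncard}

/-- The diameter of a set with respect to a distance. -/
def diamOf {α : Type*} (dist : α → α → ℕ) (S : Set α) : ℕ :=
  sSup {n | ∃ x ∈ S, ∃ y ∈ S, n = dist x y}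

/-- The canonical graph isomorphism `φ` from `B(0, N/4) ⊆ (ℤ/Nℤ)^d` onto
`B(0, N/4) ⊆ ℤ^d`, given by the signed representative of each coordinate. -/
def torusToLat {d N : ℕ} (x : Torus d N) : Lat d :=
  fun i => if ((x i).val : ℝ) ≤ (N : ℝ) / 2 then ((x i).val : ℤ) else ((x i).val : ℤ) - (N : ℤ)

/-! ### Discrete-time simple random walk -/

/-- One-step transition probability of the simple random walk. -/
def srwStep {d : ℕ} {R : Type*} [AddGroupWithOne R] (x y : Fin d → R) : ℝ≥0∞ :=
  if adj x y then ((2 * d : ℕ) : ℝ≥0∞)⁻¹ else 0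

/-- `μ` is the law on path space of the discrete-time simple random walk with
initial distribution `init`, characterized by its cylinder probabilities. -/
def IsWalkLaw {d : ℕ} {R : Type*} [AddGroupWithOne R] [MeasurableSpace R]
    (μ : Measure (ℕ → (Fin d → R))) (init : (Fin d → R) → ℝ≥0∞) : Prop :=
  IsProbabilityMeasure μ ∧
  ∀ (n : ℕ) (w : ℕ → (Fin d → R)),
    μ {ω | ∀ k, k ≤ n → ω k = w k} =
      init (w 0) * ∏ k ∈ Finset.range n, srwStep (w k) (w (k + 1))

/-- The uniform initial distribution on the torus. -/
def unifInit (d N : ℕ) : Torus d N → ℝ≥0∞ := fun _ => ((N : ℝ≥0∞) ^ d)⁻¹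

/-- The initial distribution concentrated at `x`. -/
def pointInit {α : Type*} (x : α) : α → ℝ≥0∞ := fun y => if y = x then 1 else 0

/-- The set of sites visited in the first `t` steps. -/
def visited {α : Type*} (t : ℕ) (ω : ℕ → α) : Set α := {v | ∃ k, k ≤ t ∧ ω k = v}

/-! ### Capacity and random interlacements on `ℤ^d` -/

/-- The event that the walk never returns to `V` after time `0`. -/
def escEvent {d : ℕ} (V : Set (Lat d)) : Set (ℕ → Lat d) :=
  {w | ∀ n, 1 ≤ n → w n ∉ V}

/-- `r` is the (simple random walk) capacity of `V ⊆ ℤ^d`: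
`r = Σ_{x ∈ V} P_x[H̃_V = ∞]`. -/
def IsCap (d : ℕ) (V : Set (Lat d)) (r : ℝ) : Prop :=
  ∃ μ : Lat d → Measure (ℕ → Lat d),
    (∀ x, IsWalkLaw (μ x) (pointInit x)) ∧
    r = ∑ᶠ x ∈ V, ((μ x) (escEvent V)).toReal

/-- `I` is a random interlacement at level `u` on the probability space `(Ω, P)`:
for every finite `V ⊆ ℤ^d`, `P[I ∩ V = ∅] = exp (−u · cap V)`. -/
def IsInterlacement (d : ℕ) (u : ℝ) {Ω : Type*} [MeasurableSpace Ω]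
    (P : Measure Ω) (I : Ω → Set (Lat d)) : Prop :=
  IsProbabilityMeasure P ∧
  (∀ x : Lat d, MeasurableSet {ω | x ∈ I ω}) ∧
  ∀ V : Set (Lat d), V.Finite → ∀ r : ℝ, IsCap d V r →
    P {ω | ∀ x ∈ V, x ∉ I ω} = ENNReal.ofReal (Real.exp (-u * r))

/-- `e = η(u)`, the probability that the origin lies in an infinite component of
the vacant set `V^u = ℤ^d ∖ I^u` of a random interlacement at level `u`. -/
def IsEta (d : ℕ) (u e : ℝ) : Prop :=
  ∃ (Ω : Type) (_ : MeasurableSpace Ω) (P : Measure Ω) (I : Ω → Set (Lat d)),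
    IsInterlacement d u P I ∧
    e = (P {ω | (compOf adj ((I ω)ᶜ) (0 : Lat d)).Infinite}).toReal

/-- The critical level `u_* = inf {u ≥ 0 : η(u) = 0}`. -/
def uStar (d : ℕ) : ℝ := sInf {u | 0 ≤ u ∧ IsEta d u 0}

/-- The probability of an event `E` about a random interlacement at level `u`. -/
def intProb (d : ℕ) (u : ℝ) (E : Set (Lat d) → Prop) : ℝ :=
  sSup {p | ∃ (Ω : Type) (_ : MeasurableSpace Ω) (P : Measure Ω) (I : Ω → Set (Lat d)),
    IsInterlacement d u P I ∧ p = (P {ω | E (I ω)}).toReal}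

/-- The event that `B(0,L)` is connected to the external boundary of `B(0,2L)`
by a nearest-neighbour path in `S`. -/
def connAcross (d L : ℕ) (S : Set (Lat d)) : Prop :=
  ∃ x ∈ latBall (0 : Lat d) (L : ℝ), ∃ y ∈ extBdry adj (latBall (0 : Lat d) (2 * (L : ℝ))),
    connectedIn adj S x y

/-- The critical level `u_** = inf {u ≥ 0 : α(u) > 0}`. -/
def uStarStar (d : ℕ) : ℝ :=
  sInf {u | 0 ≤ u ∧ ∃ a : ℝ, 0 < a ∧
    Tendsto (fun L : ℕ => (L : ℝ) ^ a * intProb d u fun I => connAcross d L Iᶜ)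
      atTop (nhds 0)}

/-- `u` is a strongly supercritical level for random interlacements on `ℤ^d`. -/
def StronglySupercritical (d : ℕ) (u : ℝ) : Prop :=
  ∃ μ : ℝ, 0 < μ ∧
  ∃ (Ω : Type) (_ : MeasurableSpace Ω) (P : Measure Ω) (I : ℝ → Ω → Set (Lat d)),
    (∀ v : ℝ, 0 ≤ v → IsInterlacement d v P (I v)) ∧
    (∀ v v' : ℝ, v ≤ v' → ∀ ω, I v ω ⊆ I v' ω) ∧
    ∃ N₀ : ℕ, ∀ N : ℕ, N₀ ≤ N →
      (1 - Real.exp (-(N : ℝ) ^ μ) ≤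
        (P {ω | ∃ x ∈ latBall (0 : Lat d) (N : ℝ),
          (compOf adj ((I (u * (1 + μ)) ω)ᶜ) x).Infinite}).toReal) ∧
      (1 - Real.exp (-(N : ℝ) ^ μ) ≤
        (P {ω | ∀ S₁ S₂ : Set (Lat d),
            S₁ ⊆ (I (u * (1 - μ)) ω)ᶜ ∩ latBall 0 (N : ℝ) →
            S₂ ⊆ (I (u * (1 - μ)) ω)ᶜ ∩ latBall 0 (N : ℝ) →
            IsConnSet adj S₁ → IsConnSet adj S₂ →
            (N : ℝ) / 8 ≤ (diamOf latDist S₁ : ℝ) →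
            (N : ℝ) / 8 ≤ (diamOf latDist S₂ : ℝ) →
            ∃ x ∈ S₁, ∃ y ∈ S₂,
              connectedIn adj ((I (u * (1 + μ)) ω)ᶜ ∩ latBall 0 (2 * (N : ℝ))) x y}).toReal)

/-! ### Continuous-time walk -/

/-- Sample space for the continuous-time walk: a discrete path together with
the i.i.d. exponential interarrival gaps of the driving Poisson process. -/
abbrev CTPath (d N : ℕ) := (ℕ → Torus d N) × (ℕ → ℝ)

/-- The number of jumps performed up to time `t`. -/
def nJumps (g : ℕ → ℝ) (t : ℝ) : ℕ := sSup {n | ∑ k ∈ Finset.range n, g k ≤ t}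

/-- The position of the continuous-time walk at time `t`. -/
def ctPos {d N : ℕ} (ω : CTPath d N) (t : ℝ) : Torus d N := ω.1 (nJumps ω.2 t)

/-- `ν` is the law of an i.i.d. sequence of exponential random variables of
parameter `1`, characterized by its joint survival function. -/
def IsIIDExp (ν : Measure (ℕ → ℝ)) : Prop :=
  IsProbabilityMeasure ν ∧
  ∀ (n : ℕ) (s : ℕ → ℝ), (∀ k, 0 ≤ s k) →
    ν {g | ∀ k, k ≤ n → s k < g k} =
      ENNReal.ofReal (Real.exp (-(∑ k ∈ Finset.range (n + 1), s k)))

/-- `P` is the law of the continuous-time simple random walk `Y_t = X_{N_t}`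
with initial distribution `init`. -/
def IsCTWalk {d N : ℕ} (P : Measure (CTPath d N)) (init : Torus d N → ℝ≥0∞) : Prop :=
  ∃ (μ : Measure (ℕ → Torus d N)) (ν : Measure (ℕ → ℝ)),
    IsWalkLaw μ init ∧ IsIIDExp ν ∧ P = μ.prod ν

/-- The entrance time `H_V = inf {t ≥ 0 : Y_t ∈ V}`. -/
def hitT {d N : ℕ} (V : Set (Torus d N)) (ω : CTPath d N) : ℝ :=
  sInf {t | 0 ≤ t ∧ ctPos ω t ∈ V}

/-- The entrance time to `V` after time `s`. -/
def hitTAfter {d N : ℕ} (V : Set (Torus d N)) (ω : CTPath d N) (s : ℝ) : ℝ :=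
  sInf {t | s ≤ t ∧ ctPos ω t ∈ V}

/-- The exit time `T_V = inf {t ≥ 0 : Y_t ∉ V}`. -/
def exitT {d N : ℕ} (V : Set (Torus d N)) (ω : CTPath d N) : ℝ :=
  sInf {t | 0 ≤ t ∧ ctPos ω t ∉ V}

/-- The regeneration time `t_* = (N log N)^2`. -/
def tstar (N : ℕ) : ℝ := ((N : ℝ) * Real.log N) ^ 2

/-- The first time `t ≥ s + t_*` such that the walk has avoided `B` during the
whole interval `[t − t_*, t]`. -/
def uEndAfter {d N : ℕ} (B : Set (Torus d N)) (ω : CTPath d N) (s : ℝ) : ℝ :=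
  sInf {t | s + tstar N ≤ t ∧ ∀ r, t - tstar N ≤ r → r ≤ t → ctPos ω r ∉ B}

/-- The successive excursion times `(R_k, U_k)` between `A` and (long absences
from) `B`, with the convention `(R_0, U_0) = (0, 0)`. -/
def excTimes {d N : ℕ} (A B : Set (Torus d N)) (ω : CTPath d N) : ℕ → ℝ × ℝ
  | 0 => (0, 0)
  | k + 1 =>
      let R := hitTAfter A ω (excTimes A B ω k).2
      (R, uEndAfter B ω R)

/-- The range of the continuous-time walk during the time interval `[a, b]`. -/
def ctRange {d N : ℕ} (ω : CTPath d N) (a b : ℝ) : Set (Torus d N) :=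
  {v | ∃ t, a ≤ t ∧ t ≤ b ∧ ctPos ω t = v}

/-! ### The killed walk and the quasistationary distribution -/

/-- The action of the substochastic matrix `P^B` (walk killed on `B`) on a
vector `v`. -/
def killedMul (d N : ℕ) (B : Set (Torus d N)) (v : Torus d N → ℝ) (x : Torus d N) : ℝ :=
  ∑ᶠ y : Torus d N, if y ∉ B ∧ adj x y then v y / (2 * d) else 0

/-- `l` is an eigenvalue of the killed transition matrix `P^B`. -/
def IsKilledEigenvalue (d N : ℕ) (B : Set (Torus d N)) (l : ℝ) : Prop :=
  ∃ v : Torus d N → ℝ, v ≠ 0 ∧ (∀ x ∈ B, v x = 0) ∧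
    ∀ x, x ∉ B → killedMul d N B v x = l * v x

/-- `σ` is the quasistationary distribution on `T ∖ B`: the normalized
non-negative principal (Perron–Frobenius) eigenvector of `P^B`. -/
def IsQSD (d N : ℕ) (B : Set (Torus d N)) (σ : Torus d N → ℝ) : Prop :=
  (∀ x, 0 ≤ σ x) ∧ (∀ x ∈ B, σ x = 0) ∧ (∑ᶠ x, σ x = 1) ∧
  ∃ l : ℝ, (∀ x, x ∉ B → killedMul d N B σ x = l * σ x) ∧
    ∀ l', IsKilledEigenvalue d N B l' → l' ≤ l

/-- The Dirichlet form of the simple random walk on the torus. -/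
def dirichlet (d N : ℕ) (g : Torus d N → ℝ) : ℝ :=
  (1 / 2) * ∑ᶠ x : Torus d N, ∑ᶠ y : Torus d N,
    if adj x y then (g x - g y) ^ 2 / (2 * d * (N : ℝ) ^ d) else 0

end Frag

namespace Frag

section Walk

variable {d : ℕ} {R : Type*} [AddGroupWithOne R]

/-- The finite set of nearest neighbours of `x`. -/
def nbrs (x : Fin d → R) : Finset (Fin d → R) :=
  Finset.univ.image (fun i => Function.update x i (x i + 1)) ∪
    Finset.univ.image (fun i => Function.update x i (x i - 1))

lemma adj_symm {x y : Fin d → R} (h : adj x y) : adj y x := by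
  obtain ⟨hne, i, h1, h2⟩ := h
  exact ⟨hne.symm, i, h1.symm, fun j hj => (h2 j hj).symm⟩

lemma mem_nbrs [NeZero (1 : R)] {x y : Fin d → R} : y ∈ nbrs x ↔ adj x y := by
  have h1 : (1 : R) ≠ 0 := one_ne_zero
  simp only [nbrs, Finset.mem_union, Finset.mem_image, Finset.mem_univ, true_and, adj]
  constructor
  · rintro (⟨i, rfl⟩ | ⟨i, rfl⟩)
    · refine ⟨fun h => h1 ?_, i, Or.inl (by simp), fun j hj => by simp [hj]⟩
      simpa using congrFun h i
    · refine ⟨fun h => h1 ?_, i, Or.inr (by simp), fun j hj => by simp [hj]⟩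
      simpa [eq_sub_iff_add_eq] using congrFun h i
  · rintro ⟨-, i, h | h, h2⟩
    · refine Or.inl ⟨i, ?_⟩
      ext j
      by_cases hj : j = i
      · subst hj; simp [h]
      · simp [hj, h2 j hj]
    · refine Or.inr ⟨i, ?_⟩
      ext j
      by_cases hj : j = i
      · subst hj; simp [h]
      · simp [hj, h2 j hj]

lemma adj_update [NeZero (1 : R)] (x : Fin d → R) (i : Fin d) :
    adj x (Function.update x i (x i + 1)) :=
  mem_nbrs.1 (Finset.mem_union_left _
    (Finset.mem_image_of_mem (fun i => Function.update x i (x i + 1)) (Finset.mem_univ i)))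

/-- The transition operator of the simple random walk. -/
def avg (v : (Fin d → R) → ℝ) (x : Fin d → R) : ℝ := (2 * d : ℝ)⁻¹ * ∑ y ∈ nbrs x, v y

/-- The probability that the walk started at `x` avoids `V` during times `0, …, n`. -/
def surv (V : Set (Fin d → R)) : ℕ → (Fin d → R) → ℝ
  | 0, x => if x ∈ V then 0 else 1
  | n + 1, x => if x ∈ V then 0 else avg (surv V n) x

lemma avg_mono {v w : (Fin d → R) → ℝ} (h : ∀ x, v x ≤ w x) (x : Fin d → R) :
    avg v x ≤ avg w x := by
  unfold avg
  gcongr with y _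
  exact h y

lemma avg_nonneg {v : (Fin d → R) → ℝ} (h : ∀ x, 0 ≤ v x) (x : Fin d → R) : 0 ≤ avg v x :=
  mul_nonneg (by positivity) (Finset.sum_nonneg fun y _ => h y)

lemma avg_const (hcard : ∀ x : Fin d → R, (2 * d : ℝ)⁻¹ * (nbrs x).card = 1) (c : ℝ)
    (x : Fin d → R) : avg (fun _ => c) x = c := by
  simp only [avg, Finset.sum_const, nsmul_eq_mul]
  rw [← mul_assoc, hcard, one_mul]

lemma surv_of_mem {V : Set (Fin d → R)} {x : Fin d → R} (hx : x ∈ V) (n : ℕ) :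
    surv V n x = 0 := by
  cases n <;> simp [surv, hx]

lemma surv_nonneg (V : Set (Fin d → R)) (n : ℕ) (x : Fin d → R) : 0 ≤ surv V n x := by
  induction n generalizing x with
  | zero => unfold surv; split_ifs <;> norm_num
  | succ n ih => unfold surv; split_ifs; exacts [le_rfl, avg_nonneg ih x]

lemma surv_succ_le (hcard : ∀ x : Fin d → R, (2 * d : ℝ)⁻¹ * (nbrs x).card = 1)
    (V : Set (Fin d → R)) (n : ℕ) (x : Fin d → R) : surv V (n + 1) x ≤ surv V n x := by
  induction n generalizing x with
  | zero =>
    by_cases hx : x ∈ V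
    · simp [surv, hx]
    · simp only [surv, hx, if_false]
      refine (avg_mono (w := fun _ => 1) (fun y => ?_) x).trans_eq (avg_const hcard 1 x)
      split_ifs <;> norm_num
  | succ n ih =>
    by_cases hx : x ∈ V
    · simp [surv, hx]
    · rw [surv, surv, if_neg hx, if_neg hx]
      exact avg_mono ih x

lemma surv_antitone (hcard : ∀ x : Fin d → R, (2 * d : ℝ)⁻¹ * (nbrs x).card = 1)
    (V : Set (Fin d → R)) (x : Fin d → R) : Antitone fun n => surv V n x :=
  antitone_nat_of_succ_le fun n => surv_succ_le hcard V n x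

/-- The probability that the walk started at `x` never visits `V`. -/
def survInf (V : Set (Fin d → R)) (x : Fin d → R) : ℝ := ⨅ n, surv V n x

lemma tendsto_surv (hcard : ∀ x : Fin d → R, (2 * d : ℝ)⁻¹ * (nbrs x).card = 1)
    (V : Set (Fin d → R)) (x : Fin d → R) :
    Tendsto (fun n => surv V n x) atTop (nhds (survInf V x)) :=
  tendsto_atTop_ciInf (surv_antitone hcard V x) ⟨0, by rintro _ ⟨n, rfl⟩; exact surv_nonneg V n x⟩

lemma survInf_of_mem {V : Set (Fin d → R)} {x : Fin d → R} (hx : x ∈ V) : survInf V x = 0 := by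
  simp [survInf, surv_of_mem hx]

lemma survInf_nonneg (V : Set (Fin d → R)) (x : Fin d → R) : 0 ≤ survInf V x :=
  Real.iInf_nonneg fun n => surv_nonneg V n x

lemma tendsto_avg_surv (hcard : ∀ x : Fin d → R, (2 * d : ℝ)⁻¹ * (nbrs x).card = 1)
    (V : Set (Fin d → R)) (x : Fin d → R) :
    Tendsto (fun n => avg (surv V n) x) atTop (nhds (avg (survInf V) x)) :=
  (tendsto_finsetSum _ fun y _ => tendsto_surv hcard V y).const_mul _

lemma avg_survInf (hcard : ∀ x : Fin d → R, (2 * d : ℝ)⁻¹ * (nbrs x).card = 1)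
    {V : Set (Fin d → R)} {x : Fin d → R} (hx : x ∉ V) :
    avg (survInf V) x = survInf V x := by
  refine tendsto_nhds_unique (tendsto_avg_surv hcard V x) ?_
  refine ((tendsto_add_atTop_iff_nat 1).2 (tendsto_surv hcard V x)).congr fun n => ?_
  simp [surv, hx]

lemma one_sub_survInf_le (hcard : ∀ x : Fin d → R, (2 * d : ℝ)⁻¹ * (nbrs x).card = 1)
    {V : Set (Fin d → R)} {u : (Fin d → R) → ℝ} (hu0 : ∀ x, 0 ≤ u x) (hu : ∀ x, avg u x ≤ u x)
    (huV : ∀ x ∈ V, 1 ≤ u x) (x : Fin d → R) : 1 - survInf V x ≤ u x := by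
  have key : ∀ n x, 1 - surv V n x ≤ u x := by
    intro n
    induction n with
    | zero =>
      intro x
      by_cases hx : x ∈ V
      · simpa [surv, hx] using huV x hx
      · simpa [surv, hx] using hu0 x
    | succ n ih =>
      intro x
      by_cases hx : x ∈ V
      · simpa [surv, hx] using huV x hx
      · have h1 : avg (fun y => 1 - u y) x ≤ avg (surv V n) x :=
          avg_mono (fun y => by linarith [ih y]) x
        have h2 : avg (fun y => 1 - u y) x = 1 - avg u x := by
          have h3 := avg_const hcard 1 x
          simp only [avg, Finset.sum_sub_distrib, mul_sub] at h3 ⊢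
          rw [h3]
        simp only [surv, hx, if_false]
        linarith [hu x]
  have := (tendsto_surv hcard V x).const_sub 1
  exact le_of_tendsto' this fun n => key n x

variable [NeZero (1 : R)]

lemma tsum_srwStep_mul (x : Fin d → R) {v : (Fin d → R) → ℝ} (hv : ∀ x, 0 ≤ v x) :
    ∑' y, srwStep x y * ENNReal.ofReal (v y) = ENNReal.ofReal (avg v x) := by
  rw [tsum_eq_sum (s := nbrs x)]
  · rw [avg, ENNReal.ofReal_mul (by positivity), ENNReal.ofReal_sum_of_nonneg fun y _ => hv y,
      Finset.mul_sum]
    refine Finset.sum_congr rfl fun y hy => ?_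
    rw [srwStep, if_pos (mem_nbrs.1 hy)]
    rcases Nat.eq_zero_or_pos d with rfl | hd
    · simp [nbrs] at hy
    · rw [ENNReal.ofReal_inv_of_pos (by positivity)]
      congr 2
      rw [← ENNReal.ofReal_natCast]; push_cast; rfl
  · intro y hy
    rw [srwStep, if_neg (fun h => hy (mem_nbrs.2 h)), zero_mul]

variable [MeasurableSpace R] [MeasurableSingletonClass R] [Countable R]
  {μ : Measure (ℕ → (Fin d → R))} {init : (Fin d → R) → ℝ≥0∞}

omit [AddGroupWithOne R] [NeZero (1 : R)] in
lemma measurableSet_eval (s : Set (Fin d → R)) (k : ℕ) :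
    MeasurableSet {ω : ℕ → (Fin d → R) | ω k ∈ s} :=
  measurable_pi_apply k s.to_countable.measurableSet

omit [AddGroupWithOne R] [NeZero (1 : R)] in
lemma measure_eq_tsum_eval (S : Set (ℕ → (Fin d → R))) (k : ℕ) :
    μ S = ∑' y, μ (S ∩ {ω | ω k = y}) := by
  have h := tsum_measure_preimage_singleton (μ := μ.restrict S) (s := Set.univ)
    (Set.countable_univ (α := Fin d → R)) (f := fun ω : ℕ → (Fin d → R) => ω k)
    fun y _ => measurableSet_eval {y} k
  rw [Set.preimage_univ, Measure.restrict_apply_univ, tsum_univ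
    (fun y => μ.restrict S ((fun ω : ℕ → (Fin d → R) => ω k) ⁻¹' {y}))] at h
  rw [← h]
  refine tsum_congr fun y => ?_
  have h2 := Measure.restrict_apply (μ := μ) (s := S) (measurableSet_eval {y} k)
  rw [Set.inter_comm] at h2
  exact h2

omit [AddGroupWithOne R] [NeZero (1 : R)] in
lemma measurableSet_avoid (V : Set (Fin d → R)) (m n : ℕ) :
    MeasurableSet {ω : ℕ → (Fin d → R) | ∀ j, j ≤ n → ω (m + j) ∉ V} := by
  have : {ω : ℕ → (Fin d → R) | ∀ j, j ≤ n → ω (m + j) ∉ V} =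
      ⋂ j, ⋂ (_ : j ≤ n), {ω | ω (m + j) ∈ Vᶜ} := by
    ext ω; simp
  rw [this]
  exact MeasurableSet.iInter fun j => MeasurableSet.iInter fun _ => measurableSet_eval Vᶜ (m + j)

lemma IsWalkLaw.measure_cylinder_avoid (hμ : IsWalkLaw μ init) (V : Set (Fin d → R))
    (n m : ℕ) (w : ℕ → (Fin d → R)) :
    μ ({ω | ∀ k, k ≤ m → ω k = w k} ∩ {ω | ∀ j, j ≤ n → ω (m + j) ∉ V}) =
      init (w 0) * (∏ k ∈ Finset.range m, srwStep (w k) (w (k + 1))) *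
        ENNReal.ofReal (surv V n (w m)) := by
  induction n generalizing m w with
  | zero =>
    by_cases hx : w m ∈ V
    · simp only [surv, hx, if_true, ENNReal.ofReal_zero, mul_zero]
      convert measure_empty (μ := μ)
      ext ω
      simp only [Set.mem_inter_iff, Set.mem_ofPred_eq, Set.mem_empty_iff_false, iff_false, not_and]
      intro h1 h2
      exact h2 0 le_rfl (by rw [add_zero, h1 m le_rfl]; exact hx)
    · simp only [surv, hx, if_false, ENNReal.ofReal_one, mul_one]
      rw [← hμ.2 m w]
      congr 1
      ext ω
      simp only [Set.mem_inter_iff, Set.mem_ofPred_eq, and_iff_left_iff_imp]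
      intro h1 j hj
      obtain rfl : j = 0 := by omega
      rw [add_zero, h1 m le_rfl]; exact hx
  | succ n ih =>
    by_cases hx : w m ∈ V
    · simp only [surv, hx, if_true, ENNReal.ofReal_zero, mul_zero]
      convert measure_empty (μ := μ)
      ext ω
      simp only [Set.mem_inter_iff, Set.mem_ofPred_eq, Set.mem_empty_iff_false, iff_false, not_and]
      intro h1 h2
      exact h2 0 (by omega) (by rw [add_zero, h1 m le_rfl]; exact hx)
    · rw [measure_eq_tsum_eval _ (m + 1), surv, if_neg hx,
        ← tsum_srwStep_mul _ (surv_nonneg V n), ← ENNReal.tsum_mul_left]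
      refine tsum_congr fun y => ?_
      have h0 : Function.update w (m + 1) y 0 = w 0 := by simp
      have hprod : ∏ k ∈ Finset.range (m + 1), srwStep (Function.update w (m + 1) y k)
          (Function.update w (m + 1) y (k + 1)) =
          (∏ k ∈ Finset.range m, srwStep (w k) (w (k + 1))) * srwStep (w m) y := by
        rw [Finset.prod_range_succ]
        congr 1
        · refine Finset.prod_congr rfl fun k hk => ?_
          have := Finset.mem_range.1 hk
          rw [Function.update_of_ne (by omega), Function.update_of_ne (by omega)]
        · rw [Function.update_of_ne (by omega), Function.update_self]
      have := ih (m + 1) (Function.update w (m + 1) y)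
      rw [h0, hprod, Function.update_self] at this
      rw [← mul_assoc, mul_assoc (init (w 0)), ← this]
      congr 1
      ext ω
      simp only [Set.mem_inter_iff, Set.mem_ofPred_eq]
      constructor
      · rintro ⟨⟨h1, h2⟩, h3⟩
        refine ⟨fun k hk => ?_, fun j hj => ?_⟩
        · rcases Nat.lt_or_ge m k with h | h
          · obtain rfl : k = m + 1 := by omega
            simpa using h3
          · rw [Function.update_of_ne (by omega)]; exact h1 k h
        · have := h2 (j + 1) (by omega)
          rwa [show m + (j + 1) = m + 1 + j by ring] at this
      · rintro ⟨h1, h2⟩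
        have h3 : ∀ k ≤ m, ω k = w k := fun k hk => by
          rw [h1 k (by omega), Function.update_of_ne (by omega)]
        refine ⟨⟨h3, fun j hj => ?_⟩, by simpa using h1 (m + 1) le_rfl⟩
        cases j with
        | zero => rw [add_zero, h3 m le_rfl]; exact hx
        | succ j =>
          have := h2 j (by omega)
          rwa [show m + 1 + j = m + (j + 1) by ring] at this

lemma IsWalkLaw.measure_start_avoid (hμ : IsWalkLaw μ init) (V : Set (Fin d → R))
    (n : ℕ) : μ {ω | ∀ j, j ≤ n → ω j ∉ V} = ∑' x, init x * ENNReal.ofReal (surv V n x) := by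
  rw [measure_eq_tsum_eval _ 0]
  refine tsum_congr fun x => ?_
  have := hμ.measure_cylinder_avoid V n 0 (fun _ => x)
  simp only [Finset.range_zero, Finset.prod_empty, mul_one, Nat.le_zero, forall_eq,
    zero_add] at this
  rw [← this, Set.inter_comm]

lemma IsWalkLaw.card_nbrs (hμ : IsWalkLaw μ init) {x : Fin d → R} (h0 : init x ≠ 0)
    (h1 : init x ≠ ∞) : (2 * d : ℝ)⁻¹ * (nbrs x).card = 1 := by
  have hS : μ {ω | ω 0 = x} = init x := by
    simpa using hμ.2 0 (fun _ => x)
  have h := measure_eq_tsum_eval (μ := μ) {ω | ω 0 = x} 1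
  have h2 : ∀ y, μ ({ω | ω 0 = x} ∩ {ω | ω 1 = y}) =
      init x * (srwStep x y * ENNReal.ofReal 1) := by
    intro y
    have := hμ.2 1 (fun k => if k = 0 then x else y)
    simp only [Finset.range_one, Finset.prod_singleton, if_true, zero_add, one_ne_zero,
      if_false] at this
    rw [ENNReal.ofReal_one, mul_one, ← this]
    congr 1
    ext ω
    simp only [Set.mem_inter_iff, Set.mem_ofPred_eq]
    constructor
    · rintro ⟨h1, h2⟩ k hk
      interval_cases k <;> simp [h1, h2]
    · intro h
      exact ⟨by simpa using h 0 (by omega), by simpa using h 1 le_rfl⟩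
  simp_rw [h2] at h
  rw [hS, ENNReal.tsum_mul_left, tsum_srwStep_mul (v := fun _ => (1 : ℝ)) x (by simp)] at h
  have h3 : ENNReal.ofReal (avg (fun _ => (1 : ℝ)) x) = 1 := by
    have := (ENNReal.mul_right_inj h0 h1).1 (h.symm.trans (mul_one _).symm)
    exact this
  rw [ENNReal.ofReal_eq_one] at h3
  simpa [avg] using h3

lemma IsWalkLaw.measure_escape (hcard : ∀ x : Fin d → R, (2 * d : ℝ)⁻¹ * (nbrs x).card = 1)
    {x : Fin d → R} (hμ : IsWalkLaw μ (pointInit x)) (V : Set (Fin d → R)) :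
    (μ {w | ∀ n, 1 ≤ n → w n ∉ V}).toReal = avg (survInf V) x := by
  have := hμ.1
  have h0 : ∀ᵐ ω ∂μ, ω 0 = x := by
    refine (mem_ae_iff_prob_eq_one (measurableSet_eval {x} 0)).2 ?_
    simpa [pointInit] using hμ.2 0 (fun _ => x)
  have hn : ∀ n, μ {w | ∀ j, j ≤ n → w (1 + j) ∉ V} = ENNReal.ofReal (avg (surv V n) x) := by
    intro n
    rw [measure_eq_tsum_eval _ 1, ← tsum_srwStep_mul _ (surv_nonneg V n)]
    refine tsum_congr fun y => ?_
    have h := hμ.measure_cylinder_avoid V n 1 (fun k => if k = 0 then x else y)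
    simp only [Finset.range_one, Finset.prod_singleton, if_true, zero_add, one_ne_zero,
      if_false, pointInit, one_mul] at h
    rw [← h]
    refine measure_congr (h0.mono fun ω hω => ?_)
    refine propext ⟨fun ⟨h1, h2⟩ => ⟨fun k hk => ?_, h1⟩, fun ⟨h1, h2⟩ => ⟨h2, ?_⟩⟩
    · have h2 : ω 1 = y := h2
      interval_cases k <;> simp [hω, h2]
    · simpa using h1 1 le_rfl
  have hset : {w : ℕ → (Fin d → R) | ∀ n, 1 ≤ n → w n ∉ V} =
      ⋂ n, {w | ∀ j, j ≤ n → w (1 + j) ∉ V} := by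
    ext w
    simp only [Set.mem_iInter, Set.mem_ofPred_eq]
    refine ⟨fun h n j _ => h _ (by omega), fun h n hn => ?_⟩
    obtain ⟨k, rfl⟩ := Nat.exists_eq_add_of_le hn
    exact h k k le_rfl
  have hlim := tendsto_measure_iInter_atTop (μ := μ)
    (s := fun n => {w : ℕ → (Fin d → R) | ∀ j, j ≤ n → w (1 + j) ∉ V})
    (fun n => (measurableSet_avoid V 1 n).nullMeasurableSet)
    (fun m n hmn w hw j hj => hw j (hj.trans hmn)) ⟨0, measure_ne_top _ _⟩
  rw [← hset] at hlim
  refine tendsto_nhds_unique ((ENNReal.tendsto_toReal (measure_ne_top _ _)).comp hlim) ?_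
  refine (tendsto_avg_surv hcard V x).congr fun n => ?_
  simp only [Function.comp_apply, hn]
  rw [ENNReal.toReal_ofReal (avg_nonneg (surv_nonneg V n) x)]

end Walk

section Dirichlet

lemma sum_sum_mul_sub_mul_sub {α : Type*} (F : Finset α) (w : α → α → ℝ)
    (hw : ∀ x y, w x y = w y x) (f h : α → ℝ) :
    ∑ x ∈ F, ∑ y ∈ F, w x y * ((f x - f y) * (h x - h y)) =
      2 * ∑ x ∈ F, h x * ∑ y ∈ F, w x y * (f x - f y) := by
  have h1 : ∑ x ∈ F, ∑ y ∈ F, w x y * ((f x - f y) * h y) =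
      -∑ x ∈ F, ∑ y ∈ F, w x y * ((f x - f y) * h x) := by
    rw [Finset.sum_comm, ← Finset.sum_neg_distrib]
    refine Finset.sum_congr rfl fun x _ => ?_
    rw [← Finset.sum_neg_distrib]
    refine Finset.sum_congr rfl fun y _ => ?_
    rw [hw y x]; ring
  have h2 : ∑ x ∈ F, h x * ∑ y ∈ F, w x y * (f x - f y) =
      ∑ x ∈ F, ∑ y ∈ F, w x y * ((f x - f y) * h x) := by
    refine Finset.sum_congr rfl fun x _ => ?_
    rw [Finset.mul_sum]
    exact Finset.sum_congr rfl fun y _ => by ring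
  rw [h2]
  simp only [mul_sub (_ - _) (h _) (h _), mul_sub (_ : ℝ) (_ * _) (_ * _),
    Finset.sum_sub_distrib] at h1 ⊢
  linarith

variable {d : ℕ} {R : Type*} [AddGroupWithOne R] [NeZero (1 : R)]

/-- The indicator of adjacency. -/
def adjInd (x y : Fin d → R) : ℝ := if adj x y then 1 else 0

omit [NeZero (1 : R)] in
lemma adjInd_comm (x y : Fin d → R) : adjInd x y = adjInd y x := by
  unfold adjInd
  exact if_congr ⟨adj_symm, adj_symm⟩ rfl rfl

omit [NeZero (1 : R)] in
lemma adjInd_nonneg (x y : Fin d → R) : 0 ≤ adjInd x y := by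
  unfold adjInd; split_ifs <;> norm_num

lemma sum_adjInd_mul {F : Finset (Fin d → R)} {x : Fin d → R} (hF : nbrs x ⊆ F)
    (v : (Fin d → R) → ℝ) : ∑ y ∈ F, adjInd x y * v y = ∑ y ∈ nbrs x, v y := by
  rw [← Finset.sum_subset hF (f := fun y => adjInd x y * v y)]
  · refine Finset.sum_congr rfl fun y hy => ?_
    rw [adjInd, if_pos (mem_nbrs.1 hy), one_mul]
  · intro y _ hy
    rw [adjInd, if_neg fun h => hy (mem_nbrs.2 h), zero_mul]

omit [NeZero (1 : R)] in
lemma sum_nbrs_sub (hcard : ∀ x : Fin d → R, (2 * d : ℝ)⁻¹ * (nbrs x).card = 1)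
    (v : (Fin d → R) → ℝ) (x : Fin d → R) :
    ∑ y ∈ nbrs x, (v x - v y) = 2 * d * (v x - avg v x) := by
  have h := hcard x
  have hd : (2 * d : ℝ) ≠ 0 := by
    intro h0; simp [h0] at h
  rw [Finset.sum_sub_distrib, Finset.sum_const, nsmul_eq_mul, avg, mul_sub, ← mul_assoc (2 * d : ℝ),
    mul_inv_cancel₀ hd, one_mul]
  rw [inv_mul_eq_one₀ hd] at h
  rw [h]

variable [Fintype R]

/-- The (unnormalised) Dirichlet form on a finite torus. -/
def energy (f h : (Fin d → R) → ℝ) : ℝ :=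
  ∑ x, ∑ y, adjInd x y * ((f x - f y) * (h x - h y))

lemma energy_eq (hcard : ∀ x : Fin d → R, (2 * d : ℝ)⁻¹ * (nbrs x).card = 1)
    (f h : (Fin d → R) → ℝ) : energy f h = 4 * d * ∑ x, h x * (f x - avg f x) := by
  rw [energy, sum_sum_mul_sub_mul_sub _ _ adjInd_comm]
  simp_rw [sum_adjInd_mul (Finset.subset_univ _) (fun y => f _ - f y), sum_nbrs_sub hcard]
  rw [Finset.mul_sum, Finset.mul_sum]
  exact Finset.sum_congr rfl fun x _ => by ring

omit [NeZero (1 : R)] in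
lemma energy_sq_le (f h : (Fin d → R) → ℝ) : energy f h ^ 2 ≤ energy f f * energy h h := by
  have := Finset.sum_mul_sq_le_sq_mul_sq (Finset.univ : Finset ((Fin d → R) × (Fin d → R)))
    (fun z => adjInd z.1 z.2 * (f z.1 - f z.2)) (fun z => adjInd z.1 z.2 * (h z.1 - h z.2))
  have hsq : ∀ x y : Fin d → R, adjInd x y * adjInd x y = adjInd x y := by
    intro x y; unfold adjInd; split_ifs <;> norm_num
  have hgen : ∀ f h : (Fin d → R) → ℝ, ∑ z : (Fin d → R) × (Fin d → R),
      (adjInd z.1 z.2 * (f z.1 - f z.2)) * (adjInd z.1 z.2 * (h z.1 - h z.2)) = energy f h := by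
    intro f h
    rw [Fintype.sum_prod_type, energy]
    refine Finset.sum_congr rfl fun x _ => Finset.sum_congr rfl fun y _ => ?_
    rw [mul_mul_mul_comm, hsq]
  simpa only [pow_two, hgen] using this

/-- Occupation-time form of the variational lower bound for mean entrance times. -/
lemma sum_sq_le_energy (hcard : ∀ x : Fin d → R, (2 * d : ℝ)⁻¹ * (nbrs x).card = 1)
    (hd : 0 < d) {V : Set (Fin d → R)} (hzero : ∀ x, survInf V x = 0)
    {h : (Fin d → R) → ℝ} (hV : ∀ x ∈ V, h x = 0) {S : ℝ}
    (hS : ∀ n, ∑ x, ∑ k ∈ Finset.range n, surv V k x ≤ S) :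
    4 * d * (∑ x, h x) ^ 2 ≤ S * energy h h := by
  have hd' : (0 : ℝ) < d := by exact_mod_cast hd
  have hE0 : 0 ≤ energy h h := Finset.sum_nonneg fun x _ => Finset.sum_nonneg fun y _ =>
    mul_nonneg (adjInd_nonneg x y) (mul_self_nonneg _)
  have key : ∀ n, 4 * d * (∑ x, h x * (1 - surv V n x)) ^ 2 ≤ S * energy h h := by
    intro n
    set f : (Fin d → R) → ℝ := fun x => ∑ k ∈ Finset.range n, surv V k x with hf
    have hf0 : ∀ x ∈ V, f x = 0 := fun x hx => by simp [hf, surv_of_mem hx]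
    have hfnn : ∀ x, 0 ≤ f x := fun x => Finset.sum_nonneg fun k _ => surv_nonneg V k x
    have hL : ∀ x, x ∉ V → f x - avg f x = 1 - surv V n x := by
      intro x hx
      have h1 : avg f x = ∑ k ∈ Finset.range n, surv V (k + 1) x := by
        simp only [avg, hf, surv, hx, if_false]
        rw [Finset.sum_comm, Finset.mul_sum]
      rw [h1, ← Finset.sum_sub_distrib, Finset.sum_range_sub']
      simp [surv, hx]
    have hgreen : ∀ v : (Fin d → R) → ℝ, (∀ x ∈ V, v x = 0) →
        energy f v = 4 * d * ∑ x, v x * (1 - surv V n x) := by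
      intro v hv
      rw [energy_eq hcard]
      congr 1
      refine Finset.sum_congr rfl fun x _ => ?_
      by_cases hx : x ∈ V
      · rw [hv x hx, zero_mul, zero_mul]
      · rw [hL x hx]
    have h1 := energy_sq_le f h
    rw [hgreen h hV, hgreen f hf0] at h1
    have h2 : ∑ x, f x * (1 - surv V n x) ≤ S :=
      (Finset.sum_le_sum fun x _ => mul_le_of_le_one_right (hfnn x)
        (by linarith [surv_nonneg V n x])).trans (hS n)
    have h3 : 4 * (d : ℝ) * (4 * d * (∑ x, h x * (1 - surv V n x)) ^ 2) ≤
        4 * d * (S * energy h h) := by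
      calc _ = (4 * d * ∑ x, h x * (1 - surv V n x)) ^ 2 := by ring
        _ ≤ _ := h1
        _ ≤ 4 * d * S * energy h h := by gcongr
        _ = _ := by ring
    exact le_of_mul_le_mul_left h3 (by positivity)
  have hlim : Tendsto (fun n => 4 * d * (∑ x, h x * (1 - surv V n x)) ^ 2) atTop
      (nhds (4 * d * (∑ x, h x * (1 - survInf V x)) ^ 2)) :=
    ((tendsto_finsetSum _ fun x _ =>
      ((tendsto_surv hcard V x).const_sub 1).const_mul (h x)).pow 2).const_mul _
  simp only [hzero, sub_zero, mul_one] at hlim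
  exact le_of_tendsto' hlim key

end Dirichlet

section Torus

variable {d N : ℕ}

lemma eq_of_forall_update {s : Torus d N → ℝ} [NeZero N]
    (hs : ∀ x i, s (Function.update x i (x i + 1)) = s x) (x y : Torus d N) : s x = s y := by
  have h1 : ∀ (n : ℕ) (x : Torus d N) (i : Fin d), s (Function.update x i (x i + n)) = s x := by
    intro n
    induction n with
    | zero => intro x i; simp
    | succ n ih =>
      intro x i
      have := hs (Function.update x i (x i + n)) i
      rw [ih] at this
      rw [← this]
      simp [add_assoc]
  have h2 : ∀ (x : Torus d N) (i : Fin d) (a : ZMod N), s (Function.update x i a) = s x := by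
    intro x i a
    have := h1 (a - x i).val x i
    rwa [ZMod.natCast_zmod_val, add_sub_cancel] at this
  have h3 : ∀ F : Finset (Fin d), s (F.piecewise y x) = s x := by
    intro F
    induction F using Finset.induction_on with
    | empty => simp
    | insert i F _ ih => rw [Finset.piecewise_insert, h2, ih]
  have := h3 Finset.univ
  rw [Finset.piecewise_univ] at this
  exact this.symm

lemma survInf_eq_zero [NeZero N] [NeZero (1 : ZMod N)]
    (hcard : ∀ x : Torus d N, (2 * d : ℝ)⁻¹ * (nbrs x).card = 1)
    {V : Set (Torus d N)} (hV : V.Nonempty) (x : Torus d N) : survInf V x = 0 := by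
  set s := survInf V with hs
  have hE : energy s s = 0 := by
    rw [energy_eq hcard]
    refine mul_eq_zero_of_right _ (Finset.sum_eq_zero fun x _ => ?_)
    by_cases hx : x ∈ V
    · rw [hs, survInf_of_mem hx, zero_mul]
    · rw [hs, avg_survInf hcard hx, sub_self, mul_zero]
  have hnn : ∀ x y : Torus d N, 0 ≤ adjInd x y * ((s x - s y) * (s x - s y)) :=
    fun x y => mul_nonneg (adjInd_nonneg x y) (mul_self_nonneg _)
  have hadj : ∀ x y : Torus d N, adj x y → s y = s x := by
    intro x y hxy
    have h1 := (Finset.sum_eq_zero_iff_of_nonneg fun x _ =>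
      Finset.sum_nonneg fun y _ => hnn x y).1 hE x (Finset.mem_univ _)
    have h2 := (Finset.sum_eq_zero_iff_of_nonneg fun y _ => hnn x y).1 h1 y (Finset.mem_univ _)
    rw [adjInd, if_pos hxy, one_mul, mul_self_eq_zero, sub_eq_zero] at h2
    exact h2.symm
  obtain ⟨v, hv⟩ := hV
  rw [eq_of_forall_update (s := s) (fun x i => ?_) x v, hs, survInf_of_mem hv]
  convert hadj x _ (adj_update x i)

end Torus

section Transfer

variable {d N : ℕ}

lemma torusToLat_apply [NeZero N] (x : Torus d N) (i : Fin d) :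
    torusToLat x i = (x i).valMinAbs := by
  have h : ((x i).val : ℝ) ≤ (N : ℝ) / 2 ↔ (x i).val ≤ N / 2 := by
    rw [Nat.le_div_iff_mul_le two_pos, le_div_iff₀ two_pos]
    norm_cast
  rw [torusToLat, ZMod.valMinAbs_def_pos]
  exact if_congr h rfl rfl

lemma torusToLat_injective [NeZero N] : Function.Injective (torusToLat : Torus d N → Lat d) := by
  intro x y h
  ext i
  have := congrFun h i
  rwa [torusToLat_apply, torusToLat_apply, ZMod.valMinAbs_inj] at this

lemma adj_torusToLat [NeZero N] {x y : Torus d N} (hxy : adj x y)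
    (hx : ∀ i, 2 * (|torusToLat x i| + 1) < N) : adj (torusToLat x) (torusToLat y) := by
  obtain ⟨hne, i, h1, h2⟩ := hxy
  refine ⟨fun h => hne (torusToLat_injective h), i, ?_, fun j hj => ?_⟩
  · have h3 := hx i
    have h4 := abs_le.1 (le_refl |torusToLat x i|)
    rw [torusToLat_apply] at h3 h4 ⊢
    rw [torusToLat_apply]
    rcases h1 with h1 | h1
    · left
      rw [ZMod.valMinAbs_spec]
      refine ⟨by push_cast [ZMod.coe_valMinAbs]; exact h1, ?_, ?_⟩ <;> linarith
    · right
      rw [eq_comm, ← eq_sub_iff_add_eq, ZMod.valMinAbs_spec]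
      refine ⟨by push_cast [ZMod.coe_valMinAbs]; rw [h1, add_sub_cancel_right], ?_, ?_⟩ <;> linarith
  · rw [torusToLat_apply, torusToLat_apply, h2 j hj]

lemma nbrs_subset_range_torusToLat [NeZero N] {x : Lat d} (hx : ∀ i, 2 * (|x i| + 1) < N) :
    nbrs x ⊆ Finset.univ.image (torusToLat : Torus d N → Lat d) := by
  intro y hy
  rw [mem_nbrs] at hy
  refine Finset.mem_image.2 ⟨fun i => (y i : ZMod N), Finset.mem_univ _, ?_⟩
  ext i
  rw [torusToLat_apply, ZMod.valMinAbs_spec]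
  refine ⟨rfl, ?_⟩
  have h3 := hx i
  have h4 := abs_le.1 (le_refl |x i|)
  obtain ⟨-, j, h1, h2⟩ := hy
  by_cases hj : i = j
  · subst hj
    constructor <;> rcases h1 with h1 | h1 <;> linarith
  · rw [← h2 i hj]
    constructor <;> linarith

lemma min_sub_min_sq_le (a b c : ℝ) :
    (min a c - min b c) * (min a c - min b c) ≤ (min a c - min b c) * (a - b) := by
  rcases le_total a c with h1 | h1 <;> rcases le_total b c with h2 | h2 <;>
    simp only [min_eq_left h1, min_eq_right h1, min_eq_left h2, min_eq_right h2] <;> nlinarith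

/-- The truncated equilibrium potential on the torus has energy controlled by the capacity. -/
lemma energy_truncation_le [NeZero N] [NeZero (1 : ZMod N)]
    (hcard : ∀ x : Lat d, (2 * d : ℝ)⁻¹ * (nbrs x).card = 1) (V : Set (Torus d N)) {c : ℝ}
    (hc : 0 ≤ c)
    (hfar : ∀ x : Lat d, survInf (torusToLat '' V) x < c → ∀ i, 2 * (|x i| + 1) < N) :
    energy (fun x : Torus d N => min (survInf (torusToLat '' V) (torusToLat x)) c)
      (fun x : Torus d N => min (survInf (torusToLat '' V) (torusToLat x)) c) ≤
      4 * d * (c * ∑ᶠ x ∈ torusToLat '' V, avg (survInf (torusToLat '' V)) x) := by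
  set W : Set (Lat d) := torusToLat '' V with hW
  set s := survInf W with hs
  set F : Finset (Lat d) := Finset.univ.image (torusToLat : Torus d N → Lat d) with hF
  have hinj : Set.InjOn (torusToLat : Torus d N → Lat d) (Finset.univ : Finset (Torus d N)) :=
    torusToLat_injective.injOn
  set k : Lat d → ℝ := fun x => c - min (s x) c with hk
  have hWF : W ⊆ F := by
    rintro _ ⟨v, -, rfl⟩
    exact Finset.mem_coe.2 (Finset.mem_image_of_mem _ (Finset.mem_univ v))
  have hr : ∑ᶠ x ∈ W, avg s x = ∑ x ∈ F with x ∈ W, avg s x := by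
    rw [← finsum_mem_coe_finset]
    congr! 3 with x
    rw [Finset.mem_coe, Finset.mem_filter]
    exact ⟨fun h => ⟨Finset.mem_coe.1 (hWF h), h⟩, fun h => h.2⟩
  calc energy (fun x : Torus d N => min (s (torusToLat x)) c)
        (fun x : Torus d N => min (s (torusToLat x)) c)
      ≤ ∑ x : Torus d N, ∑ y : Torus d N, adjInd (torusToLat x) (torusToLat y) *
          ((min (s (torusToLat x)) c - min (s (torusToLat y)) c) *
            (s (torusToLat x) - s (torusToLat y))) := by
        refine Finset.sum_le_sum fun x _ => Finset.sum_le_sum fun y _ => ?_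
        have hm := min_sub_min_sq_le (s (torusToLat x)) (s (torusToLat y)) c
        by_cases hxy : adj x y
        · by_cases h : adj (torusToLat x) (torusToLat y)
          · simp only [adjInd, if_pos hxy, if_pos h, one_mul]
            exact hm
          · have hx : c ≤ s (torusToLat x) := by
              by_contra! hlt
              exact h (adj_torusToLat hxy (hfar _ hlt))
            have hy : c ≤ s (torusToLat y) := by
              by_contra! hlt
              exact h (adj_symm (adj_torusToLat (adj_symm hxy) (hfar _ hlt)))
            simp only [min_eq_right hx, min_eq_right hy, sub_self, zero_mul, mul_zero, le_refl]
        · rw [adjInd, if_neg hxy, zero_mul]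
          exact mul_nonneg (adjInd_nonneg _ _) ((mul_self_nonneg _).trans hm)
    _ = ∑ x ∈ F, ∑ y ∈ F, adjInd x y * ((min (s x) c - min (s y) c) * (s x - s y)) := by
        rw [hF, Finset.sum_image hinj]
        refine Finset.sum_congr rfl fun x _ => ?_
        rw [Finset.sum_image hinj]
    _ = -∑ x ∈ F, ∑ y ∈ F, adjInd x y * ((s x - s y) * (k x - k y)) := by
        simp only [← Finset.sum_neg_distrib, hk]
        refine Finset.sum_congr rfl fun x _ => Finset.sum_congr rfl fun y _ => ?_
        ring
    _ = ∑ x ∈ F, -2 * (k x * ∑ y ∈ F, adjInd x y * (s x - s y)) := by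
        rw [sum_sum_mul_sub_mul_sub _ _ adjInd_comm, Finset.mul_sum, ← Finset.sum_neg_distrib]
        exact Finset.sum_congr rfl fun x _ => by ring
    _ = ∑ x ∈ F, if x ∈ W then 4 * d * (c * avg s x) else 0 := by
        refine Finset.sum_congr rfl fun x _ => ?_
        by_cases hlt : s x < c
        · rw [sum_adjInd_mul (nbrs_subset_range_torusToLat (hfar x hlt)) (fun y => s x - s y),
            sum_nbrs_sub hcard]
          by_cases hx : x ∈ W
          · rw [if_pos hx, hs, survInf_of_mem hx, hk]
            simp only [hs, survInf_of_mem hx, min_eq_left hc]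
            ring
          · rw [if_neg hx, hs, avg_survInf hcard hx]
            ring
        · push Not at hlt
          simp only [hk, min_eq_right hlt, sub_self, zero_mul, mul_zero]
          split_ifs with hx
          · have : c = 0 := le_antisymm (by rwa [hs, survInf_of_mem hx] at hlt) hc
            simp [this]
          · rfl
    _ = 4 * d * (c * ∑ᶠ x ∈ W, avg s x) := by
        rw [hr, ← Finset.sum_filter, Finset.mul_sum, Finset.mul_sum]

lemma card_torus_box_le [NeZero N] {ρ : ℝ} (hρ : 0 ≤ ρ) :
    ((Finset.univ.filter fun x : Torus d N => ∀ i, |(torusToLat x i : ℝ)| ≤ ρ).card : ℝ) ≤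
      (2 * ρ + 1) ^ d := by
  set A : Finset (ZMod N) := Finset.univ.filter fun a => |(a.valMinAbs : ℝ)| ≤ ρ with hA
  have h1 : (Finset.univ.filter fun x : Torus d N => ∀ i, |(torusToLat x i : ℝ)| ≤ ρ) =
      Fintype.piFinset fun _ => A := by
    ext x
    simp [hA, torusToLat_apply, Fintype.mem_piFinset]
  have h2 : A.card ≤ (Finset.Icc (-⌊ρ⌋) ⌊ρ⌋).card := by
    refine Finset.card_le_card_of_injOn ZMod.valMinAbs (fun a ha => ?_)
      (ZMod.injective_valMinAbs.injOn)
    have ha := abs_le.1 (Finset.mem_filter.1 ha).2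
    rw [Finset.coe_Icc, Set.mem_Icc, neg_le, Int.le_floor, Int.le_floor]
    constructor <;> push_cast <;> linarith
  have h3 : (A.card : ℝ) ≤ 2 * ρ + 1 := by
    have h4 : ((Finset.Icc (-⌊ρ⌋) ⌊ρ⌋).card : ℤ) = 2 * ⌊ρ⌋ + 1 := by
      have := Int.floor_nonneg.2 hρ
      rw [Int.card_Icc, Int.toNat_of_nonneg (by omega)]; ring
    have h5 : (A.card : ℤ) ≤ 2 * ⌊ρ⌋ + 1 := by rw [← h4]; exact_mod_cast h2
    have h6 : (A.card : ℝ) ≤ 2 * (⌊ρ⌋ : ℝ) + 1 := by exact_mod_cast h5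
    linarith [Int.floor_le ρ]
  rw [h1, Fintype.card_piFinset]
  simp only [Finset.prod_const, Finset.card_univ, Fintype.card_fin, Nat.cast_pow]
  gcongr

lemma sum_truncation_ge [NeZero N] {W : Set (Lat d)} {c ρ : ℝ} (hc : 0 ≤ c) (hρ : 0 ≤ ρ)
    (hfar : ∀ x : Lat d, survInf W x < c → ∀ i, |(x i : ℝ)| ≤ ρ) :
    c * ((N : ℝ) ^ d - (2 * ρ + 1) ^ d) ≤
      ∑ x : Torus d N, min (survInf W (torusToLat x)) c := by
  set B := Finset.univ.filter fun x : Torus d N => ∀ i, |(torusToLat x i : ℝ)| ≤ ρ with hB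
  have h1 := card_torus_box_le (d := d) (N := N) hρ
  have h2 : ∀ x : Torus d N, c - (if x ∈ B then c else 0) ≤ min (survInf W (torusToLat x)) c := by
    intro x
    by_cases hx : x ∈ B
    · rw [if_pos hx, sub_self]
      exact le_min (survInf_nonneg _ _) hc
    · rw [if_neg hx, sub_zero]
      refine le_min ?_ le_rfl
      by_contra! hlt
      exact hx (Finset.mem_filter.2 ⟨Finset.mem_univ _, hfar _ hlt⟩)
  refine le_trans ?_ (Finset.sum_le_sum fun x _ => h2 x)
  rw [Finset.sum_sub_distrib, Finset.sum_const, Finset.card_univ, ← Finset.sum_filter,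
    Finset.sum_const, Finset.filter_mem_eq_inter, Finset.univ_inter]
  simp only [nsmul_eq_mul, Fintype.card_pi, ZMod.card, Finset.prod_const, Finset.card_univ,
    Fintype.card_fin, Nat.cast_pow]
  nlinarith

end Transfer

section Barrier

lemma rpow_neg_quarter_le {w p : ℝ} (hw : 0 < w) (hp : 0 ≤ p) (h : 1 ≤ w * p ^ 4) :
    w ^ (-(1 / 4) : ℝ) ≤ p := by
  have h1 : w⁻¹ ≤ p ^ 4 := by rw [inv_le_iff_one_le_mul₀' hw]; exact h
  calc w ^ (-(1 / 4) : ℝ) = w⁻¹ ^ (1 / 4 : ℝ) := by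
        rw [Real.inv_rpow hw.le, Real.rpow_neg hw.le]
    _ ≤ (p ^ 4) ^ (1 / 4 : ℝ) := Real.rpow_le_rpow (by positivity) h1 (by norm_num)
    _ = p := by
        rw [← Real.rpow_natCast, ← Real.rpow_mul hp]; norm_num

lemma le_rpow_neg_quarter {w p : ℝ} (hw : 0 < w) (hp : 0 ≤ p) (h : w * p ^ 4 ≤ 1) :
    p ≤ w ^ (-(1 / 4) : ℝ) := by
  have h1 : p ^ 4 ≤ w⁻¹ := by
    rw [← one_div, le_div_iff₀ hw]; linarith
  calc p = (p ^ 4) ^ (1 / 4 : ℝ) := by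
        rw [← Real.rpow_natCast, ← Real.rpow_mul hp]; norm_num
    _ ≤ w⁻¹ ^ (1 / 4 : ℝ) := Real.rpow_le_rpow (by positivity) h1 (by norm_num)
    _ = w ^ (-(1 / 4) : ℝ) := by
        rw [Real.inv_rpow hw.le, Real.rpow_neg hw.le]

lemma one_add_rpow_neg_quarter_le {z : ℝ} (h1 : -(1 / 10) ≤ z) (h2 : z ≤ 1 / 10) :
    (1 + z) ^ (-(1 / 4) : ℝ) ≤ 1 - z / 4 + 3 / 16 * z ^ 2 := by
  refine rpow_neg_quarter_le (by linarith) (by nlinarith) ?_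
  have hq : (1 - z / 4 + 3 / 16 * z ^ 2) ^ 2 ≥ 1 - z / 2 + 7 / 16 * z ^ 2 - 3 / 32 * z ^ 3 := by
    nlinarith [sq_nonneg (z ^ 2)]
  have hq0 : 0 ≤ 1 - z / 2 + 7 / 16 * z ^ 2 - 3 / 32 * z ^ 3 := by
    nlinarith [sq_nonneg z, mul_nonneg (sq_nonneg z) (sub_nonneg.2 h2)]
  have hq2 : (1 - z / 4 + 3 / 16 * z ^ 2) ^ 4 ≥
      (1 - z / 2 + 7 / 16 * z ^ 2 - 3 / 32 * z ^ 3) ^ 2 := by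
    calc (1 - z / 4 + 3 / 16 * z ^ 2) ^ 4 = ((1 - z / 4 + 3 / 16 * z ^ 2) ^ 2) ^ 2 := by ring
      _ ≥ _ := pow_le_pow_left₀ hq0 hq 2
  have h3 : 1 ≤ (1 + z) * (1 - z / 2 + 7 / 16 * z ^ 2 - 3 / 32 * z ^ 3) ^ 2 := by
    have hid : (1 + z) * (1 - z / 2 + 7 / 16 * z ^ 2 - 3 / 32 * z ^ 3) ^ 2 =
        1 + z ^ 2 * (1 / 8 + z / 2 - 87 / 256 * z ^ 2 + 13 / 64 * z ^ 3 - 75 / 1024 * z ^ 4 +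
          9 / 1024 * z ^ 5) := by ring
    have ha : |z| ≤ 1 / 10 := abs_le.2 ⟨h1, h2⟩
    have hpow : ∀ n : ℕ, |z ^ n| ≤ (1 / 10) ^ n := fun n => by
      rw [abs_pow]; exact pow_le_pow_left₀ (abs_nonneg z) ha n
    have b2 := abs_le.1 (hpow 2)
    have b3 := abs_le.1 (hpow 3)
    have b4 := abs_le.1 (hpow 4)
    have b5 := abs_le.1 (hpow 5)
    norm_num at b2 b3 b4 b5
    rw [hid]
    have : 0 ≤ 1 / 8 + z / 2 - 87 / 256 * z ^ 2 + 13 / 64 * z ^ 3 - 75 / 1024 * z ^ 4 +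
        9 / 1024 * z ^ 5 := by linarith
    nlinarith [mul_nonneg (sq_nonneg z) this]
  nlinarith

/-- A positive function on the lattice which is strictly superharmonic when `d ≥ 3`. -/
def barrier {d : ℕ} (x : Lat d) : ℝ := (∑ i, (x i : ℝ) ^ 2 + 400) ^ (-(1 / 4) : ℝ)

variable {d : ℕ}

lemma barrier_pos (x : Lat d) : 0 < barrier x := by unfold barrier; positivity

lemma sum_sq_update (x : Lat d) (i : Fin d) (a : ℤ) :
    ∑ j, (Function.update x i a j : ℝ) ^ 2 = ∑ j, (x j : ℝ) ^ 2 + ((a : ℝ) ^ 2 - (x i : ℝ) ^ 2) := by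
  rw [← Finset.add_sum_erase _ _ (Finset.mem_univ i),
    ← Finset.add_sum_erase (a := i) _ (fun j => (x j : ℝ) ^ 2) (Finset.mem_univ i),
    Function.update_self]
  have : ∑ j ∈ Finset.univ.erase i, (Function.update x i a j : ℝ) ^ 2 =
      ∑ j ∈ Finset.univ.erase i, (x j : ℝ) ^ 2 :=
    Finset.sum_congr rfl fun j hj => by rw [Function.update_of_ne (Finset.ne_of_mem_erase hj)]
  rw [this]; ring

lemma sum_nbrs_le {R : Type*} [AddGroupWithOne R] {v : (Fin d → R) → ℝ} (hv : ∀ x, 0 ≤ v x)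
    (x : Fin d → R) :
    ∑ y ∈ nbrs x, v y ≤
      ∑ i, (v (Function.update x i (x i + 1)) + v (Function.update x i (x i - 1))) := by
  have himg : ∀ f : Fin d → Fin d → R, ∑ y ∈ Finset.univ.image f, v y ≤ ∑ i, v (f i) := by
    intro f
    exact Finset.sum_image_le_of_nonneg fun y _ => hv y
  rw [Finset.sum_add_distrib, nbrs]
  have h := Finset.sum_union_inter (f := v)
    (s₁ := Finset.univ.image fun i => Function.update x i (x i + 1))
    (s₂ := Finset.univ.image fun i => Function.update x i (x i - 1))
  have h0 := Finset.sum_nonneg fun y (_ : y ∈ (Finset.univ.image fun i =>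
    Function.update x i (x i + 1)) ∩ Finset.univ.image fun i => Function.update x i (x i - 1)) =>
      hv y
  linarith [himg fun i => Function.update x i (x i + 1), himg fun i => Function.update x i (x i - 1)]

lemma avg_barrier_lt (hd : 3 ≤ d) (x : Lat d) : avg barrier x < barrier x := by
  have hd' : (3 : ℝ) ≤ d := by exact_mod_cast hd
  set s : ℝ := ∑ j, (x j : ℝ) ^ 2 with hs
  have hs0 : 0 ≤ s := Finset.sum_nonneg fun j _ => sq_nonneg _
  set t : ℝ := s + 401 with ht
  have ht0 : 0 < t := by linarith
  have hT : 0 < t ^ (-(1 / 4) : ℝ) := by positivity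
  have hstep : ∀ (i : Fin d) (e : ℤ), e ^ 2 = 1 → barrier (Function.update x i (x i + e)) ≤
      t ^ (-(1 / 4) : ℝ) * (1 - (2 * e * x i / t) / 4 + 3 / 16 * (4 * (x i : ℝ) ^ 2 / t ^ 2)) := by
    intro i e he
    have he' : (e : ℝ) ^ 2 = 1 := by exact_mod_cast he
    have hi : (x i : ℝ) ^ 2 ≤ s :=
      Finset.single_le_sum (f := fun j => (x j : ℝ) ^ 2) (fun j _ => sq_nonneg _)
        (Finset.mem_univ i)
    have h1 : barrier (Function.update x i (x i + e)) =
        (t * (1 + 2 * e * x i / t)) ^ (-(1 / 4) : ℝ) := by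
      rw [barrier, sum_sq_update]
      congr 1
      field_simp
      push_cast
      rw [ht, ← hs]
      linear_combination he'
    have hz1 : -(1 / 10) ≤ 2 * e * x i / t := by
      rw [le_div_iff₀ ht0]
      nlinarith [sq_nonneg ((x i : ℝ) + 20 * e), sq_nonneg ((x i : ℝ) - 20 * e)]
    have hz2 : 2 * e * x i / t ≤ 1 / 10 := by
      rw [div_le_iff₀ ht0]
      nlinarith [sq_nonneg ((x i : ℝ) + 20 * e), sq_nonneg ((x i : ℝ) - 20 * e)]
    rw [h1, Real.mul_rpow ht0.le (by linarith)]
    refine mul_le_mul_of_nonneg_left ((one_add_rpow_neg_quarter_le hz1 hz2).trans_eq ?_) hT.le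
    rw [div_pow, mul_pow, mul_pow, he']
    norm_num
  have hsum : ∑ y ∈ nbrs x, barrier y ≤
      t ^ (-(1 / 4) : ℝ) * (2 * d + 3 / 2 * s / t ^ 2) := by
    refine (sum_nbrs_le (fun y => (barrier_pos y).le) x).trans ?_
    calc _ ≤ ∑ i, t ^ (-(1 / 4) : ℝ) * (2 + 3 / 2 / t ^ 2 * (x i : ℝ) ^ 2) := by
          refine Finset.sum_le_sum fun i _ => ?_
          have h1 := hstep i 1 (by norm_num)
          have h2 := hstep i (-1) (by norm_num)
          rw [← sub_eq_add_neg] at h2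
          refine (add_le_add h1 h2).trans_eq ?_
          push_cast
          ring
      _ = _ := by
          rw [← Finset.mul_sum, Finset.sum_add_distrib, ← Finset.mul_sum, ← hs]
          simp only [Finset.sum_const, Finset.card_univ, Fintype.card_fin, nsmul_eq_mul]
          ring
  have hlow : t ^ (-(1 / 4) : ℝ) * (1 + 1 / t / 4) ≤ barrier x := by
    have h1 : barrier x = (t * (1 - 1 / t)) ^ (-(1 / 4) : ℝ) := by
      rw [barrier, ← hs]
      congr 1
      field_simp
      rw [ht]; ring
    have hy1 : 1 / t ≤ 1 / 401 := one_div_le_one_div_of_le (by norm_num) (by linarith)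
    have hy0 : 0 < 1 / t := by positivity
    rw [h1, Real.mul_rpow ht0.le (by linarith)]
    refine mul_le_mul_of_nonneg_left (le_rpow_neg_quarter (by linarith) (by positivity) ?_) hT.le
    generalize 1 / t = y at hy1 hy0
    have : (1 - y) * (1 + y / 4) ^ 4 =
      1 - y ^ 2 * (5 / 8 + 5 / 16 * y + 15 / 256 * y ^ 2 + y ^ 3 / 256) := by ring
    rw [this]
    have : 0 ≤ y ^ 2 * (5 / 8 + 5 / 16 * y + 15 / 256 * y ^ 2 + y ^ 3 / 256) := by positivity
    linarith
  refine lt_of_lt_of_le ?_ hlow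
  calc avg barrier x ≤ (2 * d : ℝ)⁻¹ * (t ^ (-(1 / 4) : ℝ) * (2 * d + 3 / 2 * s / t ^ 2)) := by
        unfold avg; gcongr
    _ = t ^ (-(1 / 4) : ℝ) * (1 + 3 / (4 * d) * (s / t ^ 2)) := by
        field_simp; ring
    _ ≤ t ^ (-(1 / 4) : ℝ) * (1 + 1 / 4 * (s / t ^ 2)) := by
        have : 3 / (4 * (d : ℝ)) ≤ 1 / 4 := by
          rw [div_le_div_iff₀ (by positivity) (by norm_num)]; linarith
        gcongr
    _ < t ^ (-(1 / 4) : ℝ) * (1 + 1 / t / 4) := by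
        have : s / t ^ 2 < 1 / t := by
          rw [div_lt_div_iff₀ (by positivity) ht0]; nlinarith
        refine mul_lt_mul_of_pos_left ?_ hT
        linarith

lemma avg_const_mul {R : Type*} [AddGroupWithOne R] (c : ℝ) (v : (Fin d → R) → ℝ)
    (x : Fin d → R) : avg (fun y => c * v y) x = c * avg v x := by
  simp only [avg, ← Finset.mul_sum]; ring

lemma one_sub_survInf_le_barrier (hd : 3 ≤ d)
    (hcard : ∀ x : Lat d, (2 * d : ℝ)⁻¹ * (nbrs x).card = 1) {W : Set (Lat d)} {m : ℝ}
    (hm : 0 < m) (hW : ∀ x ∈ W, m ≤ barrier x) (x : Lat d) :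
    1 - survInf W x ≤ m⁻¹ * barrier x := by
  refine one_sub_survInf_le hcard (u := fun x => m⁻¹ * barrier x)
    (fun x => mul_nonneg (by positivity) (barrier_pos x).le) (fun x => ?_) (fun x hx => ?_) x
  · rw [avg_const_mul]
    have := (avg_barrier_lt hd x).le
    gcongr
  · rw [inv_mul_eq_div, one_le_div hm]
    exact hW x hx

lemma abs_le_of_survInf_lt (hd : 3 ≤ d)
    (hcard : ∀ x : Lat d, (2 * d : ℝ)⁻¹ * (nbrs x).card = 1) {W : Set (Lat d)} {r ρ : ℝ}
    (hr : 1 ≤ r) (hρ : 0 < ρ) (hW : ∀ x ∈ W, ∀ i, |(x i : ℝ)| ≤ r) (x : Lat d)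
    (hx : survInf W x < 1 - ((d + 400) * (r / ρ) ^ 2) ^ (1 / 4 : ℝ)) (i : Fin d) :
    |(x i : ℝ)| ≤ ρ := by
  by_contra! hlt
  have hm0 : 0 < (d + 400) * r ^ 2 := by positivity
  have h1 := one_sub_survInf_le_barrier hd hcard (W := W)
    (m := ((d + 400) * r ^ 2) ^ (-(1 / 4) : ℝ)) (by positivity) (fun y hy => by
      refine Real.rpow_le_rpow_of_nonpos (by positivity) ?_ (by norm_num)
      have : ∑ j, (y j : ℝ) ^ 2 ≤ ∑ _j : Fin d, r ^ 2 :=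
        Finset.sum_le_sum fun j _ => sq_le_sq' (abs_le.1 (hW y hy j)).1 (abs_le.1 (hW y hy j)).2
      simp only [Finset.sum_const, Finset.card_univ, Fintype.card_fin, nsmul_eq_mul] at this
      nlinarith) x
  have h2 : barrier x ≤ (ρ ^ 2) ^ (-(1 / 4) : ℝ) := by
    refine Real.rpow_le_rpow_of_nonpos (by positivity) ?_ (by norm_num)
    have h3 : (x i : ℝ) ^ 2 ≤ ∑ j, (x j : ℝ) ^ 2 :=
      Finset.single_le_sum (f := fun j => (x j : ℝ) ^ 2) (fun j _ => sq_nonneg _)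
        (Finset.mem_univ i)
    have h4 : ρ ^ 2 ≤ (x i : ℝ) ^ 2 := by
      rw [← sq_abs (x i : ℝ)]
      exact pow_le_pow_left₀ hρ.le hlt.le 2
    linarith
  have h3 : (((d + 400) * r ^ 2) ^ (-(1 / 4) : ℝ))⁻¹ * (ρ ^ 2) ^ (-(1 / 4) : ℝ) =
      ((d + 400) * (r / ρ) ^ 2) ^ (1 / 4 : ℝ) := by
    rw [Real.rpow_neg (by positivity), Real.rpow_neg (by positivity), inv_inv,
      ← Real.inv_rpow (by positivity), ← Real.mul_rpow (by positivity) (by positivity)]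
    congr 1
    field_simp
  have h4 := mul_le_mul_of_nonneg_left h2
    (inv_nonneg.2 (Real.rpow_nonneg hm0.le (-(1 / 4) : ℝ)))
  linarith

lemma exists_cap_lower_bound (hd : 3 ≤ d) (M : ℕ) :
    ∃ κ : ℝ, 0 < κ ∧ ((∀ x : Lat d, (2 * d : ℝ)⁻¹ * (nbrs x).card = 1) →
      ∀ W : Set (Lat d), W.Nonempty → (∀ x ∈ W, ∀ i, |x i| ≤ M) →
        κ ≤ ∑ᶠ x ∈ W, avg (survInf W) x) := by
  set B : Finset (Lat d) := Fintype.piFinset fun _ => Finset.Icc (-(M : ℤ)) M with hB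
  obtain ⟨z, -, hz⟩ := B.exists_min_image (fun x => 1 - avg barrier x / barrier x)
    ⟨0, by simp [hB]⟩
  refine ⟨1 - avg barrier z / barrier z, ?_, fun hcard W hne hW => ?_⟩
  · rw [sub_pos, div_lt_one (barrier_pos z)]
    exact avg_barrier_lt hd z
  have hWB : ∀ x ∈ W, x ∈ B := fun x hx => by
    rw [hB, Fintype.mem_piFinset]
    exact fun i => Finset.mem_Icc.2 (abs_le.1 (hW x hx i))
  have hfin : W.Finite := B.finite_toSet.subset hWB
  obtain ⟨y, hy, hmin⟩ := hfin.exists_minimalFor barrier W hne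
  have hmin' : ∀ x ∈ W, barrier y ≤ barrier x := fun x hx => by
    rcases le_total (barrier x) (barrier y) with h | h
    · exact hmin hx h
    · exact h
  have h1 := one_sub_survInf_le_barrier hd hcard (barrier_pos y) hmin'
  have h2 : 1 - avg barrier y / barrier y ≤ avg (survInf W) y := by
    have h3 : avg (fun x => 1 - (barrier y)⁻¹ * barrier x) y ≤ avg (survInf W) y :=
      avg_mono (fun x => by linarith [h1 x]) y
    have h4 := avg_const hcard 1 y
    have h5 := avg_const_mul (barrier y)⁻¹ barrier y
    simp only [avg, Finset.sum_sub_distrib, mul_sub] at h3 h4 h5 ⊢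
    rw [h4, h5, inv_mul_eq_div] at h3
    exact h3
  refine (hz y (hWB y hy)).trans (h2.trans ?_)
  rw [finsum_mem_eq_finite_toFinset_sum _ hfin]
  exact Finset.single_le_sum (f := fun x => avg (survInf W) x)
    (fun x _ => avg_nonneg (survInf_nonneg W) x) (hfin.mem_toFinset.2 hy)

end Barrier

section HittingTime

lemma IsIIDExp.ae_pos {ν : Measure (ℕ → ℝ)} (hν : IsIIDExp ν) : ∀ᵐ g ∂ν, ∀ k, 0 < g k := by
  have := hν.1
  rw [ae_all_iff]
  intro k
  have h := hν.2 k (fun _ => 0) fun _ => le_rfl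
  simp only [Finset.sum_const_zero, neg_zero, Real.exp_zero, ENNReal.ofReal_one] at h
  have hm : MeasurableSet {g : ℕ → ℝ | ∀ j, j ≤ k → 0 < g j} := by
    measurability
  have hae : ∀ᵐ g ∂ν, ∀ j, j ≤ k → 0 < g j := mem_ae_iff.2 ((prob_compl_eq_zero_iff hm).2 h)
  exact hae.mono fun g hg => hg k le_rfl

lemma IsIIDExp.one_le_lintegral {ν : Measure (ℕ → ℝ)} (hν : IsIIDExp ν) (k : ℕ) :
    1 ≤ ∫⁻ g, ENNReal.ofReal (g k) ∂ν := by
  rw [lintegral_eq_lintegral_meas_lt ν (hν.ae_pos.mono fun g hg => (hg k).le)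
    (measurable_pi_apply k).aemeasurable]
  have h1 : (1 : ℝ≥0∞) = ∫⁻ t in Set.Ioi (0 : ℝ), ENNReal.ofReal (Real.exp (-t)) := by
    rw [← ofReal_integral_eq_lintegral_ofReal (integrableOn_exp_neg_Ioi 0)
      (ae_of_all _ fun t => (Real.exp_pos _).le), integral_exp_neg_Ioi_zero, ENNReal.ofReal_one]
  rw [h1]
  refine setLIntegral_mono' measurableSet_Ioi fun t ht => ?_
  have h := hν.2 k (Pi.single k t) fun j => by
    rcases eq_or_ne j k with rfl | hj
    · simpa using (Set.mem_Ioi.1 ht).le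
    · simp [hj]
  rw [Finset.sum_pi_single', if_pos (Finset.self_mem_range_succ k)] at h
  rw [← h]
  refine measure_mono fun g hg => ?_
  simpa using hg k le_rfl

variable {d N : ℕ}

lemma nJumps_sum_range {g : ℕ → ℝ} (hg : ∀ k, 0 < g k) (m : ℕ) :
    nJumps g (∑ k ∈ Finset.range m, g k) = m := by
  have hS : StrictMono fun n => ∑ k ∈ Finset.range n, g k :=
    strictMono_nat_of_lt_succ fun n => by simpa [Finset.sum_range_succ] using hg n
  have : {n | ∑ k ∈ Finset.range n, g k ≤ ∑ k ∈ Finset.range m, g k} = Set.Iic m :=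
    Set.ext fun n => hS.le_iff_le
  rw [nJumps, this, csSup_Iic]

lemma sum_range_le_of_le_nJumps {g : ℕ → ℝ} (hg : ∀ k, 0 < g k) {t : ℝ} (ht : 0 ≤ t) {m : ℕ}
    (hm : m ≤ nJumps g t) : ∑ k ∈ Finset.range m, g k ≤ t := by
  have hS : Monotone fun n => ∑ k ∈ Finset.range n, g k :=
    monotone_nat_of_le_succ fun n => by simpa [Finset.sum_range_succ] using (hg n).le
  by_cases hb : BddAbove {n | ∑ k ∈ Finset.range n, g k ≤ t}
  · have : nJumps g t ∈ {n | ∑ k ∈ Finset.range n, g k ≤ t} := Nat.sSup_mem ⟨0, by simpa⟩ hb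
    exact (hS hm).trans this
  · obtain ⟨n, hn, hmn⟩ := not_bddAbove_iff.1 hb m
    exact (hS hmn.le).trans hn

lemma hitT_nonneg (V : Set (Torus d N)) (ω : CTPath d N) : 0 ≤ hitT V ω :=
  Real.sInf_nonneg fun _ ht => ht.1

lemma hitT_univ (ω : CTPath d N) : hitT Set.univ ω = 0 := by
  have : {t : ℝ | 0 ≤ t ∧ ctPos ω t ∈ (Set.univ : Set (Torus d N))} = Set.Ici 0 := by
    ext t; simp
  rw [hitT, this, csInf_Ici]

lemma sum_range_le_hitT {V : Set (Torus d N)} {w : ℕ → Torus d N} {g : ℕ → ℝ}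
    (hg : ∀ k, 0 < g k) {m : ℕ} (hm : w m ∈ V) (hmin : ∀ j, j < m → w j ∉ V) :
    ∑ k ∈ Finset.range m, g k ≤ hitT V (w, g) := by
  refine le_csInf ⟨∑ k ∈ Finset.range m, g k, Finset.sum_nonneg fun k _ => (hg k).le, ?_⟩ ?_
  · rwa [ctPos, nJumps_sum_range hg]
  · rintro t ⟨ht0, ht⟩
    refine sum_range_le_of_le_nJumps hg ht0 ?_
    by_contra! h
    exact hmin _ h ht

lemma sum_indicator_le_hitT {V : Set (Torus d N)} {w : ℕ → Torus d N} {g : ℕ → ℝ}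
    (hg : ∀ k, 0 < g k) (hw : ∃ m, w m ∈ V) (n : ℕ) :
    ∑ k ∈ Finset.range n, {w : ℕ → Torus d N | ∀ j, j ≤ k → w j ∉ V}.indicator 1 w *
      ENNReal.ofReal (g k) ≤ ENNReal.ofReal (hitT V (w, g)) := by
  have h1 : ∀ k, {w : ℕ → Torus d N | ∀ j, j ≤ k → w j ∉ V}.indicator 1 w *
      ENNReal.ofReal (g k) = if k < Nat.find hw then ENNReal.ofReal (g k) else 0 := by
    intro k
    by_cases hk : k < Nat.find hw
    · rw [if_pos hk, Set.indicator_of_mem, Pi.one_apply, one_mul]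
      exact fun j hj => Nat.find_min hw (hj.trans_lt hk)
    · rw [if_neg hk, Set.indicator_of_notMem, zero_mul]
      exact fun h => h _ (not_lt.1 hk) (Nat.find_spec hw)
  simp only [h1]
  rw [← Finset.sum_filter]
  calc _ ≤ ∑ k ∈ Finset.range (Nat.find hw), ENNReal.ofReal (g k) :=
        Finset.sum_le_sum_of_subset fun k hk => Finset.mem_range.2 (Finset.mem_filter.1 hk).2
    _ = ENNReal.ofReal (∑ k ∈ Finset.range (Nat.find hw), g k) :=
        (ENNReal.ofReal_sum_of_nonneg fun k _ => (hg k).le).symm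
    _ ≤ _ := ENNReal.ofReal_le_ofReal
        (sum_range_le_hitT hg (Nat.find_spec hw) fun j => Nat.find_min hw)

instance (n : ℕ) : MeasurableSingletonClass (ZMod n) := ⟨fun _ => trivial⟩

variable [NeZero N] [NeZero (1 : ZMod N)] {μ : Measure (ℕ → Torus d N)}

lemma IsWalkLaw.card_nbrs_of_unifInit (hμ : IsWalkLaw μ (unifInit d N)) (x : Torus d N) :
    (2 * d : ℝ)⁻¹ * (nbrs x).card = 1 := by
  refine hμ.card_nbrs (x := x) ?_ ?_
  · simp [unifInit]
  · simp [unifInit, NeZero.ne]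

lemma IsWalkLaw.ae_exists_mem (hμ : IsWalkLaw μ (unifInit d N)) {V : Set (Torus d N)}
    (hV : V.Nonempty) : ∀ᵐ w ∂μ, ∃ m, w m ∈ V := by
  have hcard := hμ.card_nbrs_of_unifInit
  have hlim : Tendsto (fun n => μ {ω | ∀ j, j ≤ n → ω j ∉ V}) atTop (nhds 0) := by
    simp only [hμ.measure_start_avoid, tsum_fintype]
    have : (0 : ℝ≥0∞) = ∑ x : Torus d N, unifInit d N x * ENNReal.ofReal (survInf V x) := by
      simp [survInf_eq_zero hcard hV]
    rw [this]
    refine tendsto_finsetSum _ fun x _ => ENNReal.Tendsto.const_mul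
      (ENNReal.tendsto_ofReal (tendsto_surv hcard V x)) (Or.inr ?_)
    simp [unifInit, NeZero.ne]
  refine le_antisymm (ge_of_tendsto' hlim fun n => measure_mono fun w hw j _ hj => hw ⟨j, hj⟩)
    zero_le

lemma sum_surv_le_integral_hitT {P : Measure (CTPath d N)} (hP : IsCTWalk P (unifInit d N))
    {V : Set (Torus d N)} (hV : V.Nonempty) (hE : ∫ ω, hitT V ω ∂P ≠ 0) (n : ℕ) :
    ∑ x, ∑ k ∈ Finset.range n, surv V k x ≤ (N : ℝ) ^ d * ∫ ω, hitT V ω ∂P := by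
  obtain ⟨μ, ν, hμ, hν, rfl⟩ := hP
  have := hμ.1
  have := hν.1
  have hint : Integrable (hitT V) (μ.prod ν) := by
    by_contra h
    exact hE (integral_undef h)
  have hae : ∀ᵐ ω ∂μ.prod ν, (∃ m, ω.1 m ∈ V) ∧ ∀ k, 0 < ω.2 k :=
    (Measure.quasiMeasurePreserving_fst.ae (hμ.ae_exists_mem hV)).and
      (Measure.quasiMeasurePreserving_snd.ae hν.ae_pos)
  have hA : ∀ k, MeasurableSet {w : ℕ → Torus d N | ∀ j, j ≤ k → w j ∉ V} := fun k => by
    simpa using measurableSet_avoid V 0 k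
  have hmain : ∑ k ∈ Finset.range n, μ {w | ∀ j, j ≤ k → w j ∉ V} ≤
      ENNReal.ofReal (∫ ω, hitT V ω ∂μ.prod ν) := by
    rw [ofReal_integral_eq_lintegral_ofReal hint (ae_of_all _ (hitT_nonneg V))]
    refine le_trans ?_ (lintegral_mono_ae
      (hae.mono fun ω hω => sum_indicator_le_hitT hω.2 hω.1 n))
    rw [lintegral_finsetSum']
    · refine Finset.sum_le_sum fun k _ => ?_
      rw [lintegral_prod_mul (f := {w : ℕ → Torus d N | ∀ j, j ≤ k → w j ∉ V}.indicator 1)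
        (g := fun g : ℕ → ℝ => ENNReal.ofReal (g k)) (aemeasurable_one.indicator (hA k))
        (measurable_pi_apply k).ennreal_ofReal.aemeasurable, lintegral_indicator_one (hA k)]
      exact le_mul_of_one_le_right' (hν.one_le_lintegral k)
    · exact fun k _ => (((measurable_one.indicator (hA k)).comp measurable_fst).mul
        ((measurable_pi_apply k).comp measurable_snd).ennreal_ofReal).aemeasurable
  have hN : (N : ℝ) ^ d ≠ 0 := pow_ne_zero _ (NeZero.ne _)
  have hsum : ∑ k ∈ Finset.range n, μ {w | ∀ j, j ≤ k → w j ∉ V} =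
      ENNReal.ofReal (((N : ℝ) ^ d)⁻¹ * ∑ x, ∑ k ∈ Finset.range n, surv V k x) := by
    have hinit : ∀ x, unifInit d N x = ENNReal.ofReal ((N : ℝ) ^ d)⁻¹ := fun x => by
      rw [ENNReal.ofReal_inv_of_pos (by positivity), ENNReal.ofReal_pow (by positivity),
        ENNReal.ofReal_natCast, unifInit]
    simp only [hμ.measure_start_avoid, tsum_fintype, hinit]
    rw [Finset.sum_comm, Finset.mul_sum, ENNReal.ofReal_sum_of_nonneg]
    · refine Finset.sum_congr rfl fun x _ => ?_
      rw [Finset.mul_sum, ENNReal.ofReal_sum_of_nonneg fun k _ =>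
        mul_nonneg (by positivity) (surv_nonneg V k x)]
      exact Finset.sum_congr rfl fun k _ => (ENNReal.ofReal_mul (by positivity)).symm
    · exact fun x _ => mul_nonneg (by positivity)
        (Finset.sum_nonneg fun k _ => surv_nonneg V k x)
  rw [hsum, ENNReal.ofReal_le_ofReal_iff (integral_nonneg (hitT_nonneg V))] at hmain
  rwa [inv_mul_le_iff₀ (by positivity)] at hmain

lemma one_le_mul_integral_hitT {P : Measure (CTPath d N)} (hP : IsCTWalk P (unifInit d N))
    {V : Set (Torus d N)} (hV : V.Nonempty) (hE : ∫ ω, hitT V ω ∂P ≠ 0) :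
    1 ≤ (N : ℝ) ^ d * ∫ ω, hitT V ω ∂P := by
  refine le_trans ?_ (sum_surv_le_integral_hitT hP hV hE 1)
  obtain ⟨x, hx⟩ : ∃ x, x ∉ V := by
    by_contra! h
    rw [Set.eq_univ_of_forall h] at hE
    simp [hitT_univ] at hE
  simp only [Finset.sum_range_one]
  refine le_trans ?_ (Finset.single_le_sum (f := fun x => surv V 0 x)
    (fun y _ => surv_nonneg V 0 y) (Finset.mem_univ x))
  simp [surv, hx]

end HittingTime

section Capacity

variable {d N : ℕ}

lemma abs_torusToLat_le [NeZero N] {x : Torus d N} {R : ℝ} (hx : x ∈ torusBall 0 R) (i : Fin d) :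
    |(torusToLat x i : ℝ)| ≤ R := by
  have h1 : min (0 - x i).val (x i - 0).val ≤ torusDist (0 : Torus d N) x :=
    Finset.le_sup (f := fun i => min ((0 : Torus d N) i - x i).val (x i - (0 : Torus d N) i).val)
      (Finset.mem_univ i)
  have h2 : (torusToLat x i).natAbs ≤ torusDist (0 : Torus d N) x := by
    refine le_trans ?_ h1
    rw [torusToLat_apply, ZMod.valMinAbs_natAbs_eq_min, zero_sub, sub_zero, ZMod.neg_val]
    split_ifs with h
    · simp [h]
    · exact (min_comm _ _).le
  calc |(torusToLat x i : ℝ)| = ((torusToLat x i).natAbs : ℝ) := by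
        rw [Nat.cast_natAbs, Int.cast_abs]
    _ ≤ (torusDist (0 : Torus d N) x : ℝ) := by exact_mod_cast h2
    _ ≤ R := hx

lemma IsCap.card_nbrs {W : Set (Lat d)} {r : ℝ} (h : IsCap d W r) (x : Lat d) :
    (2 * d : ℝ)⁻¹ * (nbrs x).card = 1 := by
  obtain ⟨μ, hμ, -⟩ := h
  exact (hμ x).card_nbrs (x := x) (by simp [pointInit]) (by simp [pointInit])

lemma IsCap.eq_finsum {W : Set (Lat d)} {r : ℝ} (h : IsCap d W r) :
    r = ∑ᶠ x ∈ W, avg (survInf W) x := by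
  have hcard := h.card_nbrs
  obtain ⟨μ, hμ, rfl⟩ := h
  exact finsum_mem_congr rfl fun x _ => (hμ x).measure_escape hcard W

lemma IsCap.nonneg {W : Set (Lat d)} {r : ℝ} (h : IsCap d W r) : 0 ≤ r := by
  obtain ⟨μ, -, rfl⟩ := h
  exact finsum_nonneg fun x => finsum_nonneg fun _ => ENNReal.toReal_nonneg

lemma mul_sq_le_cap_mul_integral_hitT [NeZero N] [NeZero (1 : ZMod N)] (hd : 0 < d)
    {P : Measure (CTPath d N)} (hP : IsCTWalk P (unifInit d N)) {V : Set (Torus d N)}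
    (hV : V.Nonempty) (hE : ∫ ω, hitT V ω ∂P ≠ 0) {r : ℝ} (hr : IsCap d (torusToLat '' V) r)
    {c ρ : ℝ} (hc : 0 < c) (hρ : 0 ≤ ρ) (hρN : 2 * (ρ + 1) < N)
    (hfar : ∀ x : Lat d, survInf (torusToLat '' V) x < c → ∀ i, |(x i : ℝ)| ≤ ρ) :
    c * ((N : ℝ) ^ d - (2 * ρ + 1) ^ d) ^ 2 ≤ (N : ℝ) ^ d * (∫ ω, hitT V ω ∂P) * r := by
  have hcardT : ∀ x : Torus d N, (2 * d : ℝ)⁻¹ * (nbrs x).card = 1 := by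
    obtain ⟨μ, ν, hμ, -, -⟩ := hP
    exact hμ.card_nbrs_of_unifInit
  have hE0 : 0 ≤ ∫ ω, hitT V ω ∂P := integral_nonneg (hitT_nonneg V)
  set W := torusToLat '' V with hW
  have h1 := sum_sq_le_energy hcardT hd (survInf_eq_zero hcardT hV)
    (h := fun x => min (survInf W (torusToLat x)) c) (fun x hx => by
      rw [survInf_of_mem (Set.mem_image_of_mem _ hx), min_eq_left hc.le])
    (sum_surv_le_integral_hitT hP hV hE)
  have h2 := energy_truncation_le hr.card_nbrs V hc.le fun x hx i => by
    have : 2 * ((|x i| : ℤ) + 1 : ℝ) < N := by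
      rw [Int.cast_abs]
      linarith [hfar x hx i]
    exact_mod_cast this
  rw [← hW, ← hr.eq_finsum] at h2
  have h3 := sum_truncation_ge (N := N) hc.le hρ hfar
  have h4 : 0 ≤ (N : ℝ) ^ d - (2 * ρ + 1) ^ d :=
    sub_nonneg.2 (pow_le_pow_left₀ (by linarith) (by linarith) d)
  have h5 := pow_le_pow_left₀ (mul_nonneg hc.le h4) h3 2
  have h6 := mul_le_mul_of_nonneg_left h2 (mul_nonneg (by positivity : (0 : ℝ) ≤ (N : ℝ) ^ d) hE0)
  have hd' : (0 : ℝ) < d := by exact_mod_cast hd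
  refine le_of_mul_le_mul_left (?_ : 4 * d * c * _ ≤ 4 * d * c * _) (by positivity)
  calc 4 * d * c * (c * ((N : ℝ) ^ d - (2 * ρ + 1) ^ d) ^ 2)
      = 4 * d * (c * ((N : ℝ) ^ d - (2 * ρ + 1) ^ d)) ^ 2 := by ring
    _ ≤ 4 * d * (∑ x : Torus d N, min (survInf W (torusToLat x)) c) ^ 2 := by gcongr
    _ ≤ _ := h1.trans h6
    _ = _ := by ring

lemma one_le_one_add_mul_one_sub_pow {q : ℝ} (h0 : 0 ≤ q) (h1 : q ≤ 1 / 2) :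
    1 ≤ (1 + 14 * q) * (1 - q) ^ 3 := by
  have h2 : 0 ≤ q * ((1 - 2 * q) * (11 - 17 * q + 7 * q ^ 2)) :=
    mul_nonneg h0 (mul_nonneg (by linarith) (by linarith [sq_nonneg q]))
  linarith [show (1 + 14 * q) * (1 - q) ^ 3 =
    1 + q * ((1 - 2 * q) * (11 - 17 * q + 7 * q ^ 2)) by ring]

/-- The bound on the inverse expected entrance time when `N` is large enough. -/
lemma one_div_integral_hitT_le [NeZero N] [NeZero (1 : ZMod N)] (hd : 3 ≤ d) {ε : ℝ}
    (hε0 : 0 < ε) (hε1 : ε < 1) {P : Measure (CTPath d N)} (hP : IsCTWalk P (unifInit d N))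
    {V : Set (Torus d N)} (hV : V.Nonempty)
    (hVB : V ⊆ torusBall (0 : Torus d N) ((N : ℝ) ^ (1 - ε / 2)))
    (hE : ∫ ω, hitT V ω ∂P ≠ 0) {r : ℝ} (hr : IsCap d (torusToLat '' V) r) {C : ℝ}
    (hC : (d + 400 : ℝ) ^ (1 / 4 : ℝ) + 3 ^ d ≤ C) (hN : C * (N : ℝ) ^ (-(ε / 8)) ≤ 1 / 2) :
    1 / ∫ ω, hitT V ω ∂P ≤ (1 + 14 * (C * (N : ℝ) ^ (-(ε / 8)))) * r / (N : ℝ) ^ d := by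
  have hN1 : (1 : ℝ) ≤ N := by exact_mod_cast NeZero.one_le
  have hN0 : (0 : ℝ) < N := by linarith
  have hE0 : 0 < ∫ ω, hitT V ω ∂P := (integral_nonneg (hitT_nonneg V)).lt_of_ne' hE
  set A : ℝ := (d + 400 : ℝ) ^ (1 / 4 : ℝ) with hA
  have hA0 : 0 < A := by positivity
  have h3 : (27 : ℝ) ≤ 3 ^ d := by
    calc (27 : ℝ) = 3 ^ 3 := by norm_num
      _ ≤ 3 ^ d := pow_le_pow_right₀ (by norm_num) hd
  set z : ℝ := (N : ℝ) ^ (-(ε / 8)) with hz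
  have hz0 : 0 < z := by positivity
  have hz1 : z ≤ 1 / 54 := by nlinarith
  have hNz : (N : ℝ)⁻¹ ≤ z := by
    rw [← Real.rpow_neg_one]
    exact Real.rpow_le_rpow_of_exponent_le hN1 (by linarith)
  have hN54 : (54 : ℝ) ≤ N := by
    have := hNz.trans hz1
    rw [inv_le_comm₀ hN0 (by norm_num)] at this
    norm_num at this
    exact_mod_cast this
  set R : ℝ := (N : ℝ) ^ (1 - ε / 2) with hR
  set ρ : ℝ := (N : ℝ) ^ (1 - ε / 4) with hρ
  have hR1 : 1 ≤ R := Real.one_le_rpow hN1 (by linarith)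
  have hρ1 : 1 ≤ ρ := Real.one_le_rpow hN1 (by linarith)
  have hρz : ρ = N * z ^ 2 := by
    rw [hz, ← Real.rpow_natCast, ← Real.rpow_mul hN0.le, ← Real.rpow_one_add' hN0.le]
    · rw [hρ]; congr 1; push_cast; ring
    · push_cast; linarith
  have hRρ : R / ρ = z ^ 2 := by
    rw [hR, hρ, ← Real.rpow_sub hN0, hz, ← Real.rpow_natCast, ← Real.rpow_mul hN0.le]
    congr 1; push_cast; ring
  have hδ : ((d + 400) * (R / ρ) ^ 2) ^ (1 / 4 : ℝ) = A * z := by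
    rw [hRρ, Real.mul_rpow (by positivity) (by positivity), ← pow_mul, ← Real.rpow_natCast,
      ← Real.rpow_mul hz0.le]
    norm_num [hA]
  have hfar : ∀ x : Lat d, survInf (torusToLat '' V) x < 1 - A * z → ∀ i, |(x i : ℝ)| ≤ ρ := by
    intro x hx
    rw [← hδ] at hx
    refine abs_le_of_survInf_lt hd hr.card_nbrs hR1 (by linarith) ?_ x hx
    rintro _ ⟨y, hy, rfl⟩ i
    exact abs_torusToLat_le (hVB hy) i
  set q : ℝ := C * z with hq
  have hAq : A * z ≤ q := by rw [hq]; nlinarith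
  have h3q : 3 ^ d * z ≤ q := by rw [hq]; nlinarith
  have hq0 : 0 ≤ q := (mul_pos hA0 hz0).le.trans hAq
  have hρN : ρ ≤ N / 4 := by
    have hz2 : z ^ 2 ≤ 1 / 4 := by nlinarith
    rw [hρz]; nlinarith
  have hmain := mul_sq_le_cap_mul_integral_hitT (by omega) hP hV hE hr (c := 1 - A * z) (ρ := ρ)
    (by linarith) (by linarith) (by linarith) hfar
  have hbox : (2 * ρ + 1) ^ d ≤ (N : ℝ) ^ d * q := by
    calc (2 * ρ + 1) ^ d ≤ (3 * ρ) ^ d := pow_le_pow_left₀ (by linarith) (by linarith) d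
      _ = (N : ℝ) ^ d * (3 ^ d * (z ^ 2) ^ d) := by rw [hρz, mul_pow, mul_pow]; ring
      _ ≤ (N : ℝ) ^ d * (3 ^ d * z) := by
          gcongr
          rw [← pow_mul]
          exact pow_le_of_le_one hz0.le (by linarith) (by omega)
      _ ≤ _ := by gcongr
  have hNd : (0 : ℝ) < (N : ℝ) ^ d := by positivity
  have hcube : (1 - q) ^ 3 * (N : ℝ) ^ d ≤ r * ∫ ω, hitT V ω ∂P := by
    refine le_of_mul_le_mul_left ?_ hNd
    calc (N : ℝ) ^ d * ((1 - q) ^ 3 * (N : ℝ) ^ d)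
        = (1 - q) * ((N : ℝ) ^ d - (N : ℝ) ^ d * q) ^ 2 := by ring
      _ ≤ (1 - A * z) * ((N : ℝ) ^ d - (2 * ρ + 1) ^ d) ^ 2 := by
          have : 0 ≤ (N : ℝ) ^ d - (N : ℝ) ^ d * q := by nlinarith
          gcongr
          linarith
      _ ≤ _ := hmain
      _ = _ := by ring
  have hpoly := one_le_one_add_mul_one_sub_pow hq0 hN
  rw [div_le_div_iff₀ hE0 hNd, one_mul]
  calc (N : ℝ) ^ d ≤ (1 + 14 * q) * (1 - q) ^ 3 * (N : ℝ) ^ d := le_mul_of_one_le_left hNd.le hpoly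
    _ = (1 + 14 * q) * ((1 - q) ^ 3 * (N : ℝ) ^ d) := by ring
    _ ≤ (1 + 14 * q) * (r * ∫ ω, hitT V ω ∂P) := by gcongr
    _ = _ := by ring

end Capacity

/-- **Lemma (lower bound on expected entrance times via capacity).**
For every nonempty `V ⊆ B = B(0, N^{1−ε/2})`,
`1/E[H_V] ≤ (1 + c N^{−c'}) · cap(φ(V)) / N^d`. -/
theorem expected_hitting_capacity_bound
    (d : ℕ) (hd : 3 ≤ d) (ε : ℝ) (hε : 0 < ε ∧ ε < 1) :
    ∃ c c' : ℝ, 0 < c ∧ 0 < c' ∧ ∀ N : ℕ, 2 ≤ N →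
      ∀ V : Set (Torus d N), V.Nonempty →
        V ⊆ torusBall (0 : Torus d N) ((N : ℝ) ^ (1 - ε / 2)) →
        ∀ P : Measure (CTPath d N), IsCTWalk P (unifInit d N) →
          ∀ r : ℝ, IsCap d (torusToLat '' V) r →
            1 / (∫ ω, hitT V ω ∂P) ≤ (1 + c * (N : ℝ) ^ (-c')) * r / (N : ℝ) ^ d := by
  obtain ⟨hε0, hε1⟩ := hε
  set C : ℝ := (d + 400 : ℝ) ^ (1 / 4 : ℝ) + 3 ^ d with hC
  have hC0 : 0 < C := by positivity
  set M : ℕ := ⌈(2 * C) ^ (8 / ε)⌉₊ with hM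
  obtain ⟨κ, hκ, hcap⟩ := exists_cap_lower_bound hd M
  refine ⟨14 * C + M ^ (2 * d) * (2 * C) / κ, ε / 8, by positivity, by positivity, ?_⟩
  intro N hN2 V hV hVB P hP r hr
  have : NeZero N := ⟨by omega⟩
  have : Fact (1 < N) := ⟨hN2⟩
  have : NeZero (1 : ZMod N) := ⟨one_ne_zero⟩
  have hr0 := hr.nonneg
  have hN1 : (1 : ℝ) ≤ N := by exact_mod_cast NeZero.one_le
  have hN0 : (0 : ℝ) < N := by linarith
  rcases eq_or_ne (∫ ω, hitT V ω ∂P) 0 with hE | hE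
  · rw [hE, div_zero]
    positivity
  rcases le_or_gt (C * (N : ℝ) ^ (-(ε / 8))) (1 / 2) with hq | hq
  · refine (one_div_integral_hitT_le hd hε0 hε1 hP hV hVB hE hr le_rfl hq).trans ?_
    rw [← mul_assoc]
    gcongr
    have : 0 ≤ M ^ (2 * d) * (2 * C) / κ := by positivity
    linarith
  have hE0 : 0 < ∫ ω, hitT V ω ∂P := (integral_nonneg (hitT_nonneg V)).lt_of_ne' hE
  have hpow : (N : ℝ) ^ (ε / 8) ≤ 2 * C := by
    rw [Real.rpow_neg hN0.le, ← div_eq_mul_inv, lt_div_iff₀ (by positivity)] at hq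
    linarith
  have hNM : (N : ℝ) ≤ M := by
    calc (N : ℝ) = ((N : ℝ) ^ (ε / 8)) ^ (8 / ε) := by
          rw [← Real.rpow_mul hN0.le, div_mul_div_cancel₀ (by norm_num), div_self hε0.ne',
            Real.rpow_one]
      _ ≤ (2 * C) ^ (8 / ε) := Real.rpow_le_rpow (by positivity) hpow (by positivity)
      _ ≤ M := Nat.le_ceil _
  have hκr : κ ≤ r := by
    rw [hr.eq_finsum]
    refine hcap hr.card_nbrs _ (hV.image _) ?_
    rintro _ ⟨y, hy, rfl⟩ i
    have h1 : (|torusToLat y i| : ℝ) ≤ M := (abs_torusToLat_le (hVB hy) i).trans <|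
      (Real.rpow_le_rpow_of_exponent_le hN1 (by linarith)).trans_eq (Real.rpow_one _) |>.trans hNM
    exact_mod_cast h1
  have hNd : (0 : ℝ) < (N : ℝ) ^ d := by positivity
  have hone := one_le_mul_integral_hitT hP hV hE
  rw [div_le_div_iff₀ hE0 hNd, one_mul]
  have hz : 1 ≤ 2 * C * (N : ℝ) ^ (-(ε / 8)) := by linarith
  have hlarge : (N : ℝ) ^ (2 * d) ≤
      (1 + (14 * C + M ^ (2 * d) * (2 * C) / κ) * (N : ℝ) ^ (-(ε / 8))) * r := by
    calc (N : ℝ) ^ (2 * d) ≤ (M : ℝ) ^ (2 * d) := pow_le_pow_left₀ hN0.le hNM _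
      _ ≤ M ^ (2 * d) * (2 * C * (N : ℝ) ^ (-(ε / 8))) := le_mul_of_one_le_right (by positivity) hz
      _ = M ^ (2 * d) * (2 * C) / κ * (N : ℝ) ^ (-(ε / 8)) * κ := by field_simp
      _ ≤ M ^ (2 * d) * (2 * C) / κ * (N : ℝ) ^ (-(ε / 8)) * r := by gcongr
      _ ≤ _ := by
          gcongr
          have : 0 ≤ 14 * C * (N : ℝ) ^ (-(ε / 8)) := by positivity
          linarith
  calc (N : ℝ) ^ d ≤ (N : ℝ) ^ d * ((N : ℝ) ^ d * ∫ ω, hitT V ω ∂P) :=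
        le_mul_of_one_le_right hNd.le hone
    _ = (N : ℝ) ^ (2 * d) * ∫ ω, hitT V ω ∂P := by ring
    _ ≤ _ := by gcongr

end Frag
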